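/- arXiv:2504.14198 — 5 statements merged into one kernel-verified Lean document; each statement's English description precedes it below -/
import Mathlib

section
/- Let F be a field with char(F) ≠ 2, let n ≥ 2, and let T : M_n(F) → M_n(F) be a bijective linear map. Then T(I) = I and T(C_n) ⊆ C_n hold if and only if there exists an invertible matrix P ∈ M_n(F) such that either T(X) = P·X·P⁻¹ for all X ∈ M_n(F), or T(X) = P·Xᵗ·P⁻¹ for all X ∈ M_n(F). -/
open Matrix

/-- The set of matrices that are products of three involutions. -/
def ProdInv3 (F : Type*) [Field F] (n : ℕ) : Set (Matrix (Fin n) (Fin n) F) :=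
  {A | ∃ J₁ J₂ J₃ : Matrix (Fin n) (Fin n) F,
    J₁ * J₁ = 1 ∧ J₂ * J₂ = 1 ∧ J₃ * J₃ = 1 ∧ A = J₁ * J₂ * J₃}

section nil
variable {F V : Type*} [Field F] [AddCommGroup V] [Module F V]

lemma exists_compl_between (R D B : Submodule F V) (hR : R ≤ B) (hD : D ≤ B) (h : Disjoint R D) :
    ∃ U, R ≤ U ∧ U ≤ B ∧ Disjoint U D ∧ U ⊔ D = B := by
  obtain ⟨a, ha, hc⟩ := h.exists_isCompl
  refine ⟨a ⊓ B, le_inf ha hR, inf_le_right, hc.disjoint.mono_left inf_le_left, ?_⟩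
  rw [sup_comm, inf_comm, inf_comm, ← sup_inf_assoc_of_le _ hD, sup_comm, hc.sup_eq_top, top_inf_eq]

lemma grade_step (S : Module.End F V) (I R0 R1 : Submodule F V) (hd : Disjoint R0 R1)
    (hs : R0 ⊔ R1 = I.map S) (hI : I.map S ≤ I) (h0 : R0.map S ≤ R1) (h1 : R1.map S ≤ R0) :
    ∃ V0 V1 : Submodule F V, Disjoint V0 V1 ∧ V0 ⊔ V1 = I ∧ V0.map S ≤ V1 ∧ V1.map S ≤ V0 := by
  have hR0I : R0 ≤ I := (le_sup_left.trans hs.le).trans hI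
  have hR1I : R1 ≤ I := (le_sup_right.trans hs.le).trans hI
  rw [Submodule.map_le_iff_le_comap] at h0 h1
  obtain ⟨V1, a1, a2, a3, a4⟩ := exists_compl_between R1 (R0 ⊓ LinearMap.ker S)
    (I ⊓ R0.comap S) (le_inf hR1I h1)
    (le_inf (inf_le_left.trans hR0I) (inf_le_right.trans (by
      intro x hx; rw [LinearMap.mem_ker] at hx; simp [hx])))
    (hd.symm.mono_right inf_le_left)
  obtain ⟨V0, b1, b2, b3, b4⟩ := exists_compl_between R0 (V1 ⊓ (I ⊓ R1.comap S))
    (I ⊓ R1.comap S) (le_inf hR0I h0) inf_le_right (by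
      rw [Submodule.disjoint_def]
      intro x hx0 hx1
      have h3 := (a2 hx1.1).2
      have h4 := hx1.2.2
      have h5 : S x = 0 := Submodule.disjoint_def.1 hd _ h3 h4
      exact Submodule.disjoint_def.1 a3 x hx1.1 ⟨hx0, h5⟩)
  refine ⟨V0, V1, ?_, ?_, ?_, ?_⟩
  · rw [Submodule.disjoint_def] at b3 ⊢
    intro x hx hx1
    exact b3 x hx ⟨hx1, b2 hx⟩
  · apply le_antisymm
    · exact sup_le (b2.trans inf_le_left) (a2.trans inf_le_left)
    · have hB0 : I ⊓ R0.comap S ≤ V0 ⊔ V1 := by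
        rw [← a4]
        exact sup_le le_sup_right ((inf_le_left.trans b1).trans le_sup_left)
      have hB1 : I ⊓ R1.comap S ≤ V0 ⊔ V1 := by
        rw [← b4]
        exact sup_le le_sup_left (inf_le_left.trans le_sup_right)
      intro x hx
      have hSx : S x ∈ R0 ⊔ R1 := by rw [hs]; exact Submodule.mem_map_of_mem hx
      obtain ⟨r0, hr0, r1, hr1, hsum⟩ := Submodule.mem_sup.1 hSx
      have hr0' : r0 ∈ I.map S := hs ▸ Submodule.mem_sup_left hr0
      obtain ⟨i0, hi0, rfl⟩ := hr0'
      have e1 : i0 ∈ I ⊓ R0.comap S := ⟨hi0, hr0⟩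
      have e2 : x - i0 ∈ I ⊓ R1.comap S := ⟨I.sub_mem hx hi0, by
        simp only [Submodule.comap_coe, Set.mem_preimage, SetLike.mem_coe, map_sub]
        rw [← hsum]; simpa using hr1⟩
      have := (V0 ⊔ V1).add_mem (hB0 e1) (hB1 e2)
      simpa using this
  · rw [Submodule.map_le_iff_le_comap]
    exact (b2.trans inf_le_right).trans (Submodule.comap_mono a1)
  · rw [Submodule.map_le_iff_le_comap]
    exact (a2.trans inf_le_right).trans (Submodule.comap_mono b1)

lemma grade_nilp (S : Module.End F V) (hS : IsNilpotent S) :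
    ∃ V0 V1 : Submodule F V, IsCompl V0 V1 ∧ V0.map S ≤ V1 ∧ V1.map S ≤ V0 := by
  obtain ⟨k, hk⟩ := hS
  have key : ∀ i ≤ k, ∃ V0 V1 : Submodule F V, Disjoint V0 V1 ∧
      V0 ⊔ V1 = LinearMap.range (S ^ (k - i)) ∧ V0.map S ≤ V1 ∧ V1.map S ≤ V0 := by
    intro i
    induction i with
    | zero =>
      intro _
      refine ⟨⊥, ⊥, disjoint_bot_left, ?_, by simp, by simp⟩
      simp [hk]
    | succ i ih =>
      intro hi
      obtain ⟨R0, R1, hd, hs, h0, h1⟩ := ih (by omega)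
      have e : k - i = (k - (i+1)) + 1 := by omega
      have e2 : LinearMap.range (S ^ (k - i)) = (LinearMap.range (S ^ (k - (i+1)))).map S := by
        rw [e, pow_succ', Module.End.mul_eq_comp, LinearMap.range_comp]
      refine grade_step S _ R0 R1 hd (hs.trans e2) ?_ h0 h1
      rw [← e2, e, pow_succ, Module.End.mul_eq_comp]
      exact LinearMap.range_comp_le_range _ _
  obtain ⟨V0, V1, hd, hs, h0, h1⟩ := key k le_rfl
  refine ⟨V0, V1, ⟨hd, codisjoint_iff.2 ?_⟩, h0, h1⟩
  rw [hs]; simp [Module.End.one_eq_id]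

lemma anticomm_nilp (S : Module.End F V) (hS : IsNilpotent S) :
    ∃ K : Module.End F V, K * K = 1 ∧ K * S = - (S * K) := by
  obtain ⟨V0, V1, hc, h0, h1⟩ := grade_nilp S hS
  obtain ⟨p, hp⟩ : ∃ p, p = Submodule.projection V0 V1 hc := ⟨_, rfl⟩
  have hp0 : ∀ x ∈ V0, p x = x := fun x hx => hp ▸ Submodule.projection_apply_left hc ⟨x, hx⟩
  have hp1 : ∀ x ∈ V1, p x = 0 := fun x hx => hp ▸ (Submodule.projection_apply_eq_zero_iff hc).2 hx
  have hdec : ∀ x, ∃ a ∈ V0, ∃ b ∈ V1, a + b = x := fun x =>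
    Submodule.mem_sup.1 (hc.sup_eq_top ▸ Submodule.mem_top)
  refine ⟨2 • p - 1, ?_, ?_⟩
  · ext x
    obtain ⟨a, ha, b, hb, rfl⟩ := hdec x
    simp [hp0 a ha, hp1 b hb, two_smul]
  · ext x
    obtain ⟨a, ha, b, hb, rfl⟩ := hdec x
    have t0 := hp1 _ (h0 (Submodule.mem_map_of_mem ha))
    have t1 := hp0 _ (h1 (Submodule.mem_map_of_mem hb))
    simp [hp0 a ha, hp1 b hb, two_smul, t0, t1]
    try abel

lemma unip_two_inv (h2 : (2 : F) ≠ 0) (N : Module.End F V) (hN : IsNilpotent N) :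
    ∃ K L : Module.End F V, K * K = 1 ∧ L * L = 1 ∧ 1 + N = K * L := by
  have hu : IsUnit ((2 : Module.End F V) + N) := by
    have h2u : IsUnit (2 : Module.End F V) := by
      have : (2 : Module.End F V) = algebraMap F _ 2 := by rw [map_ofNat]
      rw [this]
      exact (IsUnit.mk0 _ h2).map _
    exact IsNilpotent.isUnit_add_left_of_commute hN h2u (by
      have : (2 : Module.End F V) = 1 + 1 := by norm_num
      rw [this]; exact (Commute.one_right N).add_right (Commute.one_right N))
  obtain ⟨u, hu⟩ := hu
  have hc : Commute N (↑u⁻¹ : Module.End F V) := by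
    apply Commute.units_inv_right
    rw [hu]
    have : (2 : Module.End F V) = 1 + 1 := by norm_num
    rw [this]; exact ((Commute.one_right N).add_right (Commute.one_right N)).add_right (Commute.refl N)
  set S := N * (↑u⁻¹ : Module.End F V) with hSdef
  have hS : IsNilpotent S := hc.isNilpotent_mul_right hN
  obtain ⟨K, hK, hKS⟩ := anticomm_nilp S hS
  have hSu : S * u = N := by simp [hSdef, mul_assoc]
  have e1 : (1 + N) * (1 - S) = 1 + S := by
    have : ((1 + N) * (1 - S)) * u = (1 + S) * u := by
      have : (1 + N) * (1 - S) * (u : Module.End F V) = (1+N) * (u - S * u) := by noncomm_ring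
      rw [this, add_mul 1 S, hSu, hu]; noncomm_ring
    exact u.isUnit.mul_right_cancel this
  have hu2 : IsUnit (1 - S) := hS.isUnit_one_sub
  refine ⟨K, K * (1 + N), hK, ?_, by rw [← mul_assoc, hK, one_mul]⟩
  apply hu2.mul_right_cancel
  have c1 : K * (1 + S) = (1 - S) * K := by rw [mul_add, hKS]; noncomm_ring
  have c2 : (1 + S) * K = K * (1 - S) := by rw [mul_sub, hKS]; noncomm_ring
  calc K * (1 + N) * (K * (1 + N)) * (1 - S) = K * (1+N) * (K * ((1+N) * (1 - S))) := by
        simp only [mul_assoc]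
    _ = K * (1 + N) * ((1 - S) * K) := by rw [e1, c1]
    _ = K * ((1 + N) * (1 - S)) * K := by simp only [mul_assoc]
    _ = 1 * (1 - S) := by rw [e1, c1, mul_assoc, hK]; simp
end nil

section peel
variable {F V : Type*} [Field F] [AddCommGroup V] [Module F V]

/-- `X` is an involution times a unipotent, and orthogonal to `W` for the trace form. -/
def GoodSpace (W : Submodule F (Module.End F V)) : Prop :=
  ∃ X J : Module.End F V, J * J = 1 ∧ IsNilpotent (J * X - 1) ∧
    ∀ A ∈ W, LinearMap.trace F V (A * X) = 0

lemma solve_zero {E V' : Type*} [AddCommGroup E] [Module F E] [AddCommGroup V'] [Module F V']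
    (W : Submodule F E) (φ : E →ₗ[F] V') (τ : E →ₗ[F] F)
    (h1 : ∀ A ∈ W, φ A = 0 → τ A = 0) :
    ∃ μ : Module.Dual F V', ∀ A ∈ W, τ A + μ (φ A) = 0 := by
  have h : -(τ ∘ₗ W.subtype) ∈ LinearMap.range (φ ∘ₗ W.subtype).dualMap := by
    rw [LinearMap.range_dualMap_eq_dualAnnihilator_ker, Submodule.mem_dualAnnihilator]
    rintro ⟨A, hA⟩ hk
    simpa using h1 A hA (by simpa using hk)
  obtain ⟨μ, hμ⟩ := h
  refine ⟨μ, fun A hA => ?_⟩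
  have := LinearMap.congr_fun hμ ⟨A, hA⟩
  simp at this
  rw [this]; ring

lemma solve_one {E V' : Type*} [AddCommGroup E] [Module F E] [AddCommGroup V'] [Module F V']
    (W : Submodule F E) (φ : E →ₗ[F] V') (τ : E →ₗ[F] F) (f : V')
    (h1 : ∀ A ∈ W, φ A = 0 → τ A = 0) (h2 : ∀ A ∈ W, φ A ≠ f) :
    ∃ μ : Module.Dual F V', μ f = 1 ∧ ∀ A ∈ W, τ A + μ (φ A) = 0 := by
  obtain ⟨μ, hμ⟩ := solve_zero (W.prod (⊤ : Submodule F F))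
    (φ.coprod (LinearMap.toSpanSingleton F V' f)) (τ.coprod (-LinearMap.id)) (by
      rintro ⟨A, c⟩ ⟨hA, -⟩ h
      simp only [LinearMap.coprod_apply, LinearMap.toSpanSingleton_apply] at h
      have hc : c = 0 := by
        by_contra hc
        apply h2 ((-c⁻¹) • A) (W.smul_mem _ hA)
        have : φ A = - (c • f) := eq_neg_of_add_eq_zero_left h
        rw [map_smul, this, smul_neg, neg_smul, neg_neg, smul_smul, inv_mul_cancel₀ hc, one_smul]
      subst hc
      simp at h
      simp [h1 A hA h])
  refine ⟨μ, ?_, fun A hA => ?_⟩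
  · have := hμ (0, 1) ⟨W.zero_mem, trivial⟩
    simp at this
    linear_combination this
  · have := hμ (A, 0) ⟨hA, trivial⟩
    simpa using this

lemma exists_dual_sep (p : Submodule F V) (v : V) (hv : v ∉ p) :
    ∃ l : Module.Dual F V, l v = 1 ∧ ∀ x ∈ p, l x = 0 := by
  obtain ⟨l, h1, h2⟩ := Submodule.exists_le_ker_of_notMem hv
  refine ⟨(l v)⁻¹ • l, by simp [h1], fun x hx => ?_⟩
  have := h2 hx
  simp_all

/-- avoiding two proper subspaces -/
lemma exists_notMem_two (p q : Submodule F V) (hp : p ≠ ⊤) (hq : q ≠ ⊤) : ∃ v, v ∉ p ∧ v ∉ q := by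
  obtain ⟨a, ha⟩ : ∃ a, a ∉ p := by by_contra! h; exact hp (eq_top_iff.2 fun x _ => h x)
  obtain ⟨b, hb⟩ : ∃ a, a ∉ q := by by_contra! h; exact hq (eq_top_iff.2 fun x _ => h x)
  by_cases h1 : a ∈ q
  · by_cases h2 : b ∈ p
    · exact ⟨a + b, fun h => ha ((p.add_mem_iff_left h2).1 h), fun h => hb ((q.add_mem_iff_right h1).1 h)⟩
    · exact ⟨b, h2, hb⟩
  · exact ⟨a, ha, h1⟩

lemma assemble [FiniteDimensional F V] (W : Submodule F (Module.End F V))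
    (f g y : V) (l fs μ : Module.Dual F V)
    (hff : fs f = 1) (hfg : fs g = 0) (hlf : l f = 0) (hlg : l g = 1)
    (hμ : μ f = 1) (hy : fs y = 1)
    (M : Submodule F V) (π : V →ₗ[F] M) (hMl : ∀ m : M, l m = 0) (hMf : ∀ m : M, fs m = 0)
    (hπx : ∀ x, ((π x : M) : V) = x - fs x • f - l x • g)
    (XM JM : Module.End F M) (hJ : JM * JM = 1)
    (hN : IsNilpotent (JM * XM - 1))
    (h : ∀ A ∈ W, LinearMap.trace F _ ((π ∘ₗ A ∘ₗ M.subtype) * XM) + l (A y) + μ (A g) = 0) :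
    GoodSpace W := by
  obtain ⟨k, hk⟩ := hN
  have hπM : ∀ m : M, π m = m := fun m => by ext; rw [hπx, hMl, hMf]; simp
  have hπf : π f = 0 := by ext; rw [hπx, hff, hlf]; simp
  have hπg : π g = 0 := by ext; rw [hπx, hfg, hlg]; simp
  set X : Module.End F V := (M.subtype ∘ₗ XM ∘ₗ π) + μ.smulRight g + l.smulRight y with hX
  set J : Module.End F V := (M.subtype ∘ₗ JM ∘ₗ π) + fs.smulRight g + l.smulRight f with hJd
  have hJf : J f = g := by simp [hJd, hπf, hff, hlf]
  have hJg : J g = f := by simp [hJd, hπg, hfg, hlg]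
  have hJm : ∀ m : M, J m = JM m := fun m => by simp [hJd, hπM, hMl, hMf]
  have hdec : ∀ x, x = (π x : V) + fs x • f + l x • g := fun x => by rw [hπx]; abel
  have hXf : X f = g := by simp [hX, hπf, hμ, hlf]
  have hXm : ∀ m : M, X m = XM m + μ m • g := fun m => by simp [hX, hπM, hMl]
  have hXg : X g = μ g • g + y := by simp [hX, hπg, hlg]
  refine ⟨X, J, ?_, ?_, ?_⟩
  · ext x
    rw [hdec x]
    have e : JM (JM (π x)) = π x := LinearMap.congr_fun hJ (π x)
    simp only [map_add, map_smul, Module.End.mul_apply, hJf, hJg, hJm, e, Module.End.one_apply]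
  · set N := J * X - 1 with hNd
    have hNf : N f = 0 := by simp [hNd, hXf, hJg]
    have hNm : ∀ m : M, N m = ((JM * XM - 1) m : M) + μ m • f := fun m => by
      simp [hNd, hXm, hJm, hJg]; abel
    have hNg : ∃ (m : M) (c : F), N g = m + c • f := by
      refine ⟨JM (π y), μ g + l y, ?_⟩
      have : J y = JM (π y) + g + l y • f := by
        conv_lhs => rw [hdec y]
        simp only [map_add, map_smul, hJf, hJg, hJm, hy, one_smul]
      simp only [hNd, LinearMap.sub_apply, Module.End.mul_apply, hXg, map_add, map_smul, hJg,
        this, Module.End.one_apply, add_smul]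
      abel
    have hNj : ∀ (j : ℕ) (m : M), ∃ c : F, (N ^ j) m = (((JM * XM - 1) ^ j) m : M) + c • f := by
      intro j
      induction j with
      | zero => intro m; exact ⟨0, by simp⟩
      | succ j ih =>
        intro m
        obtain ⟨c, hc⟩ := ih m
        refine ⟨μ (((JM * XM - 1) ^ j) m : M), ?_⟩
        rw [pow_succ', Module.End.mul_apply, hc, map_add, map_smul, hNf, hNm, pow_succ']
        simp
    refine ⟨k + 1 + 1, ?_⟩
    have hkill : ∀ (m : M) (c : F), (N ^ (k + 1)) (m + c • f) = 0 := by
      intro m c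
      obtain ⟨d, hd⟩ := hNj k m
      have : (N ^ (k+1)) f = 0 := by rw [pow_succ, Module.End.mul_apply, hNf, map_zero]
      rw [map_add, map_smul, this, pow_succ', Module.End.mul_apply, hd, hk]
      simp [hNf]
    obtain ⟨mg, cg, hmg⟩ := hNg
    ext x
    have e : N x = ((((JM * XM - 1) (π x)) : M) + μ (π x) • f) + l x • (mg + cg • f) := by
      conv_lhs => rw [hdec x]
      rw [map_add, map_add, map_smul, map_smul, hNf, hNm, hmg]; simp
    rw [pow_succ, Module.End.mul_apply, e, map_add, map_smul, hkill, hkill]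
    simp
  · intro A hA
    rw [← h A hA]
    have e1 : A * X = (A ∘ₗ M.subtype ∘ₗ XM) ∘ₗ π + μ.smulRight (A g) + l.smulRight (A y) := by
      ext x; simp [hX]
    rw [e1, map_add, map_add, LinearMap.trace_comp_comm', LinearMap.trace_smulRight,
      LinearMap.trace_smulRight]
    have e2 : π ∘ₗ A ∘ₗ M.subtype ∘ₗ XM = (π ∘ₗ A ∘ₗ M.subtype) * XM := rfl
    rw [e2]; ring

/-- choice of the two functionals -/
lemma choose_dual [FiniteDimensional F V] (W : Submodule F (Module.End F V))
    (hW : Module.finrank F W + 2 ≤ Module.finrank F V) (f g : V) (hg : g ≠ 0)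
    (hf : f ∉ Submodule.span F {g}) :
    ∃ l fs : Module.Dual F V, fs f = 1 ∧ fs g = 0 ∧ l f = 0 ∧ l g = 1 ∧
      (∀ A ∈ W, l ∘ₗ A ≠ fs) ∧
      ((∀ A ∈ W, ∀ x, A x ∈ Submodule.span F {f}) ∨ ∃ A ∈ W, l ∘ₗ A ≠ 0) := by
  have hg' : g ∉ Submodule.span F {f} := by
    intro h
    obtain ⟨c, rfl⟩ := Submodule.mem_span_singleton.1 h
    have hc : c ≠ 0 := by rintro rfl; simp at hg
    exact hf (Submodule.mem_span_singleton.2 ⟨c⁻¹, by rw [smul_smul, inv_mul_cancel₀ hc, one_smul]⟩)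
  obtain ⟨l0, hl0g, hl0⟩ := exists_dual_sep _ _ hg'
  have hl0f : l0 f = 0 := hl0 f (Submodule.mem_span_singleton_self f)
  obtain ⟨fs0, hfs0f, hfs0⟩ := exists_dual_sep _ _ hf
  have hfs0g : fs0 g = 0 := hfs0 g (Submodule.mem_span_singleton_self g)
  have hl : ∃ l : Module.Dual F V, l f = 0 ∧ l g = 1 ∧
      ((∀ A ∈ W, ∀ x, A x ∈ Submodule.span F {f}) ∨ ∃ A ∈ W, l ∘ₗ A ≠ 0) := by
    by_cases hc : ∀ A ∈ W, ∀ x, A x ∈ Submodule.span F {f}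
    · exact ⟨l0, hl0f, hl0g, Or.inl hc⟩
    · push Not at hc
      obtain ⟨A, hA, x, hx⟩ := hc
      by_cases h0 : l0 (A x) = 0
      · obtain ⟨l1, h1, h1'⟩ := exists_dual_sep _ _ hx
        have hl1f : l1 f = 0 := h1' f (Submodule.mem_span_singleton_self f)
        refine ⟨l0 + (l1 - l1 g • l0), by simp [hl0f, hl1f], by simp [hl0g], Or.inr ⟨A, hA, ?_⟩⟩
        intro h
        have := LinearMap.congr_fun h x
        simp [h0, h1] at this
      · refine ⟨l0, hl0f, hl0g, Or.inr ⟨A, hA, fun h => h0 ?_⟩⟩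
        exact LinearMap.congr_fun h x
  obtain ⟨l, hlf, hlg, hl⟩ := hl
  suffices h : ∃ fs : Module.Dual F V, fs f = 1 ∧ fs g = 0 ∧ (∀ A ∈ W, l ∘ₗ A ≠ fs) by
    obtain ⟨fs, h1, h2, h3⟩ := h
    exact ⟨l, fs, h1, h2, hlf, hlg, h3, hl⟩
  by_contra! hcon
  set D : Submodule F (Module.Dual F V) := W.map (LinearMap.compRight F (M := V) l) with hD
  have hmem : ∀ fs : Module.Dual F V, fs f = 1 → fs g = 0 → fs ∈ D := fun fs h1 h2 => by
    obtain ⟨A, hA, rfl⟩ := hcon fs h1 h2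
    exact ⟨A, hA, rfl⟩
  have hle : (Submodule.span F {g}).dualAnnihilator ≤ D := by
    intro k hk
    rw [Submodule.mem_dualAnnihilator] at hk
    have hkg : k g = 0 := hk g (Submodule.mem_span_singleton_self g)
    have h1 : fs0 + (k - k f • fs0) ∈ D := hmem _ (by simp [hfs0f]) (by simp [hfs0g, hkg])
    have h2 : fs0 ∈ D := hmem _ hfs0f hfs0g
    have h3 := D.add_mem (D.sub_mem h1 h2) (D.smul_mem (k f) h2)
    have e : fs0 + (k - k f • fs0) - fs0 + k f • fs0 = k := by abel
    rwa [e] at h3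
  have h1 := Submodule.finrank_mono hle
  have h2 := Subspace.finrank_add_finrank_dualAnnihilator_eq (Submodule.span F {g})
  rw [finrank_span_singleton hg] at h2
  have h3 : Module.finrank F D ≤ Module.finrank F W := Submodule.finrank_map_le _ _
  omega
end peel

section mainw
variable {F : Type*} [Field F]

lemma step_good {V : Type*} [AddCommGroup V] [Module F V] [FiniteDimensional F V]
    (IH : ∀ M : Submodule F V, Module.finrank F M < Module.finrank F V →
      ∀ W : Submodule F (Module.End F M), (W = ⊥ ∨ Module.finrank F W < Module.finrank F M) →
        GoodSpace W)
    (W : Submodule F (Module.End F V)) (f g : V) (hg : g ≠ 0) (hf : f ∉ Submodule.span F {g})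
    (hfW : ∀ A ∈ W, A g ≠ f)
    (hK : Module.finrank F ↥(W ⊓ LinearMap.ker (LinearMap.applyₗ (R := F) (M₂ := V) g)) + 2
      ≤ Module.finrank F V) :
    GoodSpace W := by
  set W' := W ⊓ LinearMap.ker (LinearMap.applyₗ (R := F) (M₂ := V) g) with hW'
  have hmemW' : ∀ A, A ∈ W' ↔ A ∈ W ∧ A g = 0 := fun A => Iff.rfl
  obtain ⟨l, fs, hff, hfg, hlf, hlg, hne, hcase⟩ := choose_dual W' hK f g hg hf
  obtain ⟨M, hM⟩ : ∃ M, M = LinearMap.ker l ⊓ LinearMap.ker fs := ⟨_, rfl⟩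
  have hMl : ∀ m : M, l m = 0 := fun m => (hM ▸ m.2 : (m : V) ∈ LinearMap.ker l ⊓ LinearMap.ker fs).1
  have hMf : ∀ m : M, fs m = 0 := fun m => (hM ▸ m.2 : (m : V) ∈ LinearMap.ker l ⊓ LinearMap.ker fs).2
  have hMmem : ∀ x, l x = 0 → fs x = 0 → x ∈ M := fun x h1 h2 => hM ▸ ⟨h1, h2⟩
  let π : V →ₗ[F] M := LinearMap.codRestrict M (LinearMap.id - fs.smulRight f - l.smulRight g)
    (fun x => hMmem _ (by simp [hlf, hlg]) (by simp [hff, hfg]))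
  have hπx : ∀ x, ((π x : M) : V) = x - fs x • f - l x • g := fun x => rfl
  have hMlt : Module.finrank F M < Module.finrank F V := by
    apply Submodule.finrank_lt
    intro h
    have := hMl ⟨g, h ▸ Submodule.mem_top⟩
    simp [hlg] at this
  have hMge : Module.finrank F V ≤ Module.finrank F M + 2 := by
    have h1 := LinearMap.finrank_range_add_finrank_ker (LinearMap.prod l fs)
    have h2 : LinearMap.ker (LinearMap.prod l fs) = M := by rw [hM, LinearMap.ker_prod]
    have h3 := Submodule.finrank_le (LinearMap.range (LinearMap.prod l fs))
    rw [h2] at h1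
    simp at h3
    omega
  let comp : Module.End F V →ₗ[F] Module.End F M :=
    { toFun := fun A => π ∘ₗ A ∘ₗ M.subtype
      map_add' := fun A B => by ext; simp
      map_smul' := fun c A => by ext; simp }
  have hcomp : ∀ A, comp A = π ∘ₗ A ∘ₗ M.subtype := fun A => rfl
  set W'' := W' ⊓ LinearMap.ker (LinearMap.compRight F (M := V) l) with hW''
  have hgood : GoodSpace (W''.map comp) := by
    apply IH M hMlt
    rcases hcase with hc | ⟨A, hA, hlA⟩
    · left
      rw [eq_bot_iff]
      rintro _ ⟨A, hA, rfl⟩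
      rw [Submodule.mem_bot]
      ext m
      obtain ⟨c, hc⟩ := Submodule.mem_span_singleton.1 (hc A hA.1 m)
      rw [hcomp]
      simp only [LinearMap.comp_apply, Submodule.subtype_apply, ← hc, hπx]
      simp [hff, hlf]
    · right
      have h1 : Module.finrank F (W''.map comp) ≤ Module.finrank F W'' := Submodule.finrank_map_le _ _
      have h2 : Module.finrank F W'' < Module.finrank F W' := by
        apply Submodule.finrank_lt_finrank_of_lt
        refine lt_of_le_of_ne inf_le_left ?_
        intro h
        rw [← h] at hA
        exact hlA hA.2
      omega
  obtain ⟨XM, JM, hJ, hN, htr⟩ := hgood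
  let τ : Module.End F V →ₗ[F] F := LinearMap.trace F M ∘ₗ (LinearMap.mulRight F XM) ∘ₗ comp
  have hτ : ∀ A, τ A = LinearMap.trace F M ((π ∘ₗ A ∘ₗ M.subtype) * XM) := fun A => rfl
  obtain ⟨ν, hν1, hν2⟩ := solve_one W' (LinearMap.compRight F (M := V) l) τ fs
    (fun A hA h => htr _ (Submodule.mem_map_of_mem ⟨hA, h⟩)) (fun A hA => hne A hA)
  obtain ⟨y, rfl⟩ := (Module.evalEquiv F V).surjective ν
  obtain ⟨μ, hμ1, hμ2⟩ := solve_one W (LinearMap.applyₗ (R := F) (M₂ := V) g)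
    (τ + l ∘ₗ LinearMap.applyₗ (R := F) (M₂ := V) y) f
    (fun A hA h => by
      have := hν2 A ⟨hA, h⟩
      simpa using this) (fun A hA => hfW A hA)
  refine assemble W f g y l fs μ hff hfg hlf hlg hμ1 (by simpa using hν1) M π hMl hMf hπx XM JM hJ hN ?_
  intro A hA
  have := hμ2 A hA
  rw [← hτ]
  simpa using this

lemma finrank_ker_ev {V : Type*} [AddCommGroup V] [Module F V] [FiniteDimensional F V]
    (W : Submodule F (Module.End F V)) (g : V) :
    Module.finrank F (W.map (LinearMap.applyₗ (R := F) (M₂ := V) g)) +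
    Module.finrank F ↥(W ⊓ LinearMap.ker (LinearMap.applyₗ (R := F) (M₂ := V) g))
      = Module.finrank F W := by
  have h := LinearMap.finrank_range_add_finrank_ker
    ((LinearMap.applyₗ (R := F) (M₂ := V) g : (V →ₗ[F] V) →ₗ[F] V).domRestrict W)
  rw [LinearMap.range_domRestrict, LinearMap.ker_domRestrict] at h
  rw [← h]
  congr 1
  rw [← Submodule.finrank_map_subtype_eq, Submodule.map_comap_subtype]

lemma exists_f {V : Type*} [AddCommGroup V] [Module F V] [FiniteDimensional F V]
    (W : Submodule F (Module.End F V)) (g : V) (hV : 2 ≤ Module.finrank F V)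
    (h : W.map (LinearMap.applyₗ (R := F) (M₂ := V) g) ≠ ⊤) :
    ∃ f, f ∉ Submodule.span F {g} ∧ ∀ A ∈ W, A g ≠ f := by
  obtain ⟨f, h1, h2⟩ := exists_notMem_two (Submodule.span F {g}) _ (by
    intro h
    have h3 := finrank_span_le_card (R := F) ({g} : Set V)
    rw [h, finrank_top] at h3
    simp at h3
    omega) h
  exact ⟨f, h1, fun A hA e => h2 ⟨A, hA, e⟩⟩

lemma good_of_lt (n : ℕ) : ∀ {V : Type*} [AddCommGroup V] [Module F V] [FiniteDimensional F V]
    (W : Submodule F (Module.End F V)), Module.finrank F V = n →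
    (W = ⊥ ∨ Module.finrank F W < Module.finrank F V) → GoodSpace W := by
  induction n using Nat.strong_induction_on with
  | _ n ih =>
  intro V _ _ _ W hn h
  by_cases hW : W = ⊥
  · exact ⟨1, 1, by simp, by simp, by rintro A hA; rw [hW, Submodule.mem_bot] at hA; simp [hA]⟩
  have hlt := h.resolve_left hW
  obtain ⟨A, hA, hA0⟩ := Submodule.exists_mem_ne_zero_of_ne_bot hW
  obtain ⟨g, hg⟩ : ∃ g, A g ≠ 0 := by
    by_contra! hc
    exact hA0 (LinearMap.ext hc)
  have hpos : 0 < Module.finrank F (W.map (LinearMap.applyₗ (R := F) (M₂ := V) g)) := by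
    rw [Module.finrank_pos_iff_exists_ne_zero]
    exact ⟨⟨A g, ⟨A, hA, rfl⟩⟩, by simpa [Subtype.ext_iff] using hg⟩
  have hk := finrank_ker_ev W g
  obtain ⟨f, hf1, hf2⟩ := exists_f W g (by omega) (by
    intro ht
    rw [ht, finrank_top] at hk
    omega)
  refine step_good ?_ W f g ?_ hf1 hf2 (by omega)
  · intro M hM W hW
    exact ih _ (hn ▸ hM) W rfl hW
  · rintro rfl; simp at hg

lemma rankone_of_span {V : Type*} [AddCommGroup V] [Module F V] (A : Module.End F V) (v : V)
    (h : ∀ x, A x ∈ Submodule.span F {v}) : ∃ (l : Module.Dual F V), A = l.smulRight v := by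
  by_cases hv : v = 0
  · refine ⟨0, ?_⟩
    ext x
    have := h x
    simp [hv] at this
    simp [this]
  obtain ⟨l, hl, -⟩ := exists_dual_sep (⊥ : Submodule F V) v (by simpa using hv)
  refine ⟨l ∘ₗ A, ?_⟩
  ext x
  obtain ⟨c, hc⟩ := Submodule.mem_span_singleton.1 (h x)
  simp [← hc, hl]

lemma local_dim_one {V : Type*} [AddCommGroup V] [Module F V] [FiniteDimensional F V]
    (W : Submodule F (Module.End F V)) (hW : 2 ≤ Module.finrank F W)
    (h : ∀ g, Module.finrank F (W.map (LinearMap.applyₗ (R := F) (M₂ := V) g)) ≤ 1) :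
    ∀ A ∈ W, ∃ (v : V) (l : Module.Dual F V), A = l.smulRight v := by
  intro A hA
  by_contra hcon
  have hA0 : A ≠ 0 := by rintro rfl; exact hcon ⟨0, 0, by simp⟩
  have hpar : ∀ B ∈ W, ∀ x, A x ≠ 0 → ∃ c : F, B x = c • A x := by
    intro B hB x hx
    have hpos : 0 < Module.finrank F (W.map (LinearMap.applyₗ (R := F) (M₂ := V) x)) := by
      rw [Module.finrank_pos_iff_exists_ne_zero]
      exact ⟨⟨A x, ⟨A, hA, rfl⟩⟩, by simpa [Subtype.ext_iff] using hx⟩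
    obtain ⟨c, hc⟩ := exists_smul_eq_of_finrank_eq_one (le_antisymm (h x) hpos)
      (x := (⟨A x, ⟨A, hA, rfl⟩⟩ : W.map (LinearMap.applyₗ (R := F) (M₂ := V) x)))
      (by simpa [Subtype.ext_iff] using hx) ⟨B x, ⟨B, hB, rfl⟩⟩
    exact ⟨c, (congrArg Subtype.val hc).symm⟩
  obtain ⟨g, hg⟩ : ∃ g, A g ≠ 0 := by
    by_contra! hc
    exact hA0 (LinearMap.ext hc)
  obtain ⟨k, hk⟩ : ∃ k, A k ∉ Submodule.span F {A g} := by
    by_contra! hc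
    exact hcon ⟨_, rankone_of_span A _ hc⟩
  have key : ∀ B ∈ W, ∃ c : F, B = c • A := by
    intro B hB
    obtain ⟨c, hc⟩ := hpar B hB g hg
    have h1 : ∀ x, A x ∉ Submodule.span F {A g} → B x = c • A x := by
      intro x hx
      have hx0 : A x ≠ 0 := by intro h0; rw [h0] at hx; exact hx (Submodule.zero_mem _)
      obtain ⟨d, hd⟩ := hpar B hB x hx0
      obtain ⟨e, he⟩ := hpar B hB (x + g) (by
        rw [map_add]; intro h0
        apply hx
        rw [eq_neg_of_add_eq_zero_left h0]
        exact Submodule.neg_mem _ (Submodule.mem_span_singleton_self _))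
      rw [map_add, map_add, hd, hc, smul_add] at he
      have h2 : (d - e) • A x = (e - c) • A g := by
        rw [sub_smul, sub_smul, sub_eq_sub_iff_add_eq_add, he]; abel
      have hde : d - e = 0 := by
        by_contra hne
        apply hx
        rw [Submodule.mem_span_singleton]
        exact ⟨(d - e)⁻¹ * (e - c), by rw [mul_smul, ← h2, smul_smul, inv_mul_cancel₀ hne, one_smul]⟩
      rw [hde, zero_smul] at h2
      have hec : e - c = 0 := (smul_eq_zero.1 h2.symm).resolve_right hg
      rw [hd]; congr 1; linear_combination hde + hec
    refine ⟨c, LinearMap.ext fun x => ?_⟩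
    by_cases hx : A x ∈ Submodule.span F {A g}
    · have h2 := h1 (x + k) (by
        rw [map_add]; intro h0
        exact hk ((Submodule.add_mem_iff_right _ hx).1 h0))
      rw [map_add, map_add, h1 k hk, smul_add] at h2
      simpa using h2
    · exact h1 x hx
  have : Module.finrank F W ≤ 1 := by
    apply finrank_le_one (⟨A, hA⟩ : W)
    rintro ⟨B, hB⟩
    obtain ⟨c, hc⟩ := key B hB
    exact ⟨c, Subtype.ext hc.symm⟩
  omega
end mainw

section mainw2
variable {F : Type*} [Field F]

lemma caseb_aux {V : Type*} [AddCommGroup V] [Module F V] [FiniteDimensional F V]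
    (hV : 3 ≤ Module.finrank F V)
    (W : Submodule F (Module.End F V)) (hbad : ¬ GoodSpace W) (g : V) (hg : g ≠ 0)
    (hinj : ∀ A ∈ W, A g = 0 → A = 0)
    (A : Module.End F V) (hA : A ∈ W) (hf : A g ∉ Submodule.span F {g}) :
    ∃ β : Module.Dual F V, A = β.smulRight (A g) := by
  obtain ⟨f, hfA⟩ : ∃ f, f = A g := ⟨_, rfl⟩
  rw [← hfA] at hf ⊢
  obtain ⟨l, fs, hff, hfg, hlf, hlg, hne, hcase⟩ := choose_dual (Submodule.span F {A}) (by
    have := finrank_span_le_card (R := F) ({A} : Set (Module.End F V))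
    simp only [Set.toFinset_singleton, Finset.card_singleton] at this
    omega) f g hg hf
  rcases hcase with hc | ⟨B, hB, hlB⟩
  · exact rankone_of_span A f (hc A (Submodule.mem_span_singleton_self _))
  exfalso
  apply hbad
  obtain ⟨y0, hy0, hly0⟩ : ∃ y0, fs y0 = 0 ∧ l (A y0) ≠ 0 := by
    by_contra! hcon
    have h1 : ∀ x, l (A x) = fs x * l (A f) := by
      intro x
      have := hcon (x - fs x • f) (by simp [hff])
      simp only [map_sub, map_smul, smul_eq_mul] at this
      linear_combination this
    by_cases hc : l (A f) = 0
    · obtain ⟨c, rfl⟩ := Submodule.mem_span_singleton.1 hB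
      apply hlB
      ext x
      have := h1 x
      rw [hc, mul_zero] at this
      simp [this]
    · apply hne ((l (A f))⁻¹ • A) (Submodule.smul_mem _ _ (Submodule.mem_span_singleton_self _))
      ext x
      simp only [LinearMap.comp_apply, LinearMap.smul_apply, map_smul, smul_eq_mul]
      rw [h1 x]
      field_simp
  obtain ⟨M, hM⟩ : ∃ M, M = LinearMap.ker l ⊓ LinearMap.ker fs := ⟨_, rfl⟩
  have hMl : ∀ m : M, l m = 0 := fun m => (hM ▸ m.2 : (m : V) ∈ LinearMap.ker l ⊓ LinearMap.ker fs).1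
  have hMf : ∀ m : M, fs m = 0 := fun m => (hM ▸ m.2 : (m : V) ∈ LinearMap.ker l ⊓ LinearMap.ker fs).2
  have hMmem : ∀ x, l x = 0 → fs x = 0 → x ∈ M := fun x h1 h2 => hM ▸ ⟨h1, h2⟩
  let π : V →ₗ[F] M := LinearMap.codRestrict M (LinearMap.id - fs.smulRight f - l.smulRight g)
    (fun x => hMmem _ (by simp [hlf, hlg]) (by simp [hff, hfg]))
  have hπx : ∀ x, ((π x : M) : V) = x - fs x • f - l x • g := fun x => rfl
  let comp : Module.End F V →ₗ[F] Module.End F M :=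
    { toFun := fun A => π ∘ₗ A ∘ₗ M.subtype
      map_add' := fun A B => by ext; simp
      map_smul' := fun c A => by ext; simp }
  let τ : Module.End F V →ₗ[F] F := LinearMap.trace F M ∘ₗ (LinearMap.mulRight F 1) ∘ₗ comp
  have hτ : ∀ A, τ A = LinearMap.trace F M ((π ∘ₗ A ∘ₗ M.subtype) * 1) := fun A => rfl
  obtain ⟨y, hy1, hy2⟩ : ∃ y, fs y = 1 ∧ τ A + l (A y) = -1 := by
    refine ⟨f + ((l (A y0))⁻¹ * (-1 - τ A - l (A f))) • y0, by simp [hff, hy0], ?_⟩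
    simp only [map_add, map_smul, smul_eq_mul]
    field_simp
    ring
  obtain ⟨μ, hμ⟩ := solve_zero W (LinearMap.applyₗ (R := F) (M₂ := V) g)
    (τ + l ∘ₗ LinearMap.applyₗ (R := F) (M₂ := V) y)
    (fun A hA h => by rw [hinj A hA h, map_zero])
  have hμ' : ∀ A ∈ W, τ A + l (A y) + μ (A g) = 0 := fun A hA => by simpa using hμ A hA
  refine assemble W f g y l fs μ hff hfg hlf hlg ?_ hy1 M π hMl hMf hπx 1 1 (by simp) (by simp) hμ'
  have := hμ' A hA
  rw [hfA]
  linear_combination this - hy2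

lemma smulRight_indep {V : Type*} [AddCommGroup V] [Module F V] (β β' γ : Module.Dual F V) (f f' : V)
    (_hf' : f' ≠ 0) (hf : f ∉ Submodule.span F {f'})
    (h : β.smulRight f + β'.smulRight f' = γ.smulRight (f + f')) : γ = β := by
  ext x
  have := LinearMap.congr_fun h x
  simp only [LinearMap.add_apply, LinearMap.smulRight_apply, smul_add] at this
  have h2 : (γ x - β x) • f = (β' x - γ x) • f' := by
    rw [sub_smul, sub_smul, sub_eq_sub_iff_add_eq_add, ← this]; abel
  by_contra hne
  apply hf
  rw [Submodule.mem_span_singleton]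
  exact ⟨(γ x - β x)⁻¹ * (β' x - γ x), by
    rw [mul_smul, ← h2, smul_smul, inv_mul_cancel₀ (sub_ne_zero.2 hne), one_smul]⟩

lemma main_W {V : Type*} [AddCommGroup V] [Module F V] [FiniteDimensional F V]
    (hV : 3 ≤ Module.finrank F V)
    (W : Submodule F (Module.End F V)) (hW : Module.finrank F W = Module.finrank F V)
    (hbad : ¬ GoodSpace W) :
    ∀ A ∈ W, ∃ (v : V) (l : Module.Dual F V), A = l.smulRight v := by
  by_cases hall : ∀ g, Module.finrank F (W.map (LinearMap.applyₗ (R := F) (M₂ := V) g)) ≤ 1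
  · exact local_dim_one W (by omega) hall
  push Not at hall
  obtain ⟨g, hg1⟩ := hall
  have hk := finrank_ker_ev W g
  have hg0 : g ≠ 0 := by
    rintro rfl
    have : W.map (LinearMap.applyₗ (R := F) (M₂ := V) (0 : V)) = ⊥ := by
      rw [eq_bot_iff]; rintro _ ⟨A, -, rfl⟩; simp
    rw [this, finrank_bot] at hg1
    omega
  have htop : W.map (LinearMap.applyₗ (R := F) (M₂ := V) g) = ⊤ := by
    by_contra htop
    obtain ⟨f, hf1, hf2⟩ := exists_f W g (by omega) htop
    exact hbad (step_good (fun M _ W hW => good_of_lt _ W rfl hW) W f g hg0 hf1 hf2 (by omega))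
  have hsurj : ∀ f, ∃ A ∈ W, A g = f := by
    intro f
    have : f ∈ W.map (LinearMap.applyₗ (R := F) (M₂ := V) g) := by rw [htop]; trivial
    obtain ⟨A, hA, e⟩ := this
    exact ⟨A, hA, e⟩
  have hinj : ∀ A ∈ W, A g = 0 → A = 0 := by
    rw [htop, finrank_top, hW] at hk
    have h0 : Module.finrank F ↥(W ⊓ LinearMap.ker (LinearMap.applyₗ (R := F) (M₂ := V) g)) = 0 := by
      omega
    rw [Submodule.finrank_eq_zero] at h0
    intro A hA h
    have : A ∈ W ⊓ LinearMap.ker (LinearMap.applyₗ (R := F) (M₂ := V) g) := ⟨hA, h⟩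
    rwa [h0] at this
  have key := caseb_aux hV W hbad g hg0 hinj
  intro A hA
  by_cases hAg : A g ∈ Submodule.span F {g}
  swap
  · obtain ⟨β, h⟩ := key A hA hAg
    exact ⟨_, β, h⟩
  obtain ⟨f, hf⟩ : ∃ f, f ∉ Submodule.span F {g} := by
    by_contra! h
    have h3 := finrank_span_le_card (R := F) ({g} : Set V)
    rw [show Submodule.span F {g} = ⊤ from eq_top_iff.2 fun x _ => h x, finrank_top] at h3
    simp at h3
    omega
  obtain ⟨f', hf'⟩ : ∃ f', f' ∉ Submodule.span F {f, g} := by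
    by_contra! h
    classical
    have h3 := finrank_span_finset_le_card (R := F) ({f, g} : Finset V)
    have h4 := Finset.card_le_two (a := f) (b := g)
    rw [Finset.coe_pair, Set.finrank, show Submodule.span F {f, g} = ⊤ from eq_top_iff.2 fun x _ => h x, finrank_top] at h3
    omega
  have hsub : Submodule.span F {g} ≤ Submodule.span F {f, g} := Submodule.span_mono (by simp)
  have hfm : f ∈ Submodule.span F {f, g} := Submodule.subset_span (by simp)
  have hAgm : A g ∈ Submodule.span F {f, g} := hsub hAg
  obtain ⟨B, hB, hBg⟩ := hsurj f
  obtain ⟨B', hB', hBg'⟩ := hsurj f'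
  obtain ⟨β, hβ⟩ := key B hB (by rwa [hBg])
  obtain ⟨β', hβ'⟩ := key B' hB' (by rw [hBg']; exact fun h => hf' (hsub h))
  obtain ⟨γ, hγ⟩ := key (B + B') (W.add_mem hB hB') (by
    rw [LinearMap.add_apply, hBg, hBg']
    intro h
    exact hf' ((Submodule.add_mem_iff_right _ hfm).1 (hsub h)))
  obtain ⟨δ, hδ⟩ := key (A + B) (W.add_mem hA hB) (by
    rw [LinearMap.add_apply, hBg]
    intro h
    exact hf ((Submodule.add_mem_iff_right _ hAg).1 h))
  obtain ⟨ε, hε⟩ := key (A + B + B') (W.add_mem (W.add_mem hA hB) hB') (by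
    rw [LinearMap.add_apply, LinearMap.add_apply, hBg, hBg']
    intro h
    exact hf' ((Submodule.add_mem_iff_right _ (Submodule.add_mem _ hAgm hfm)).1 (hsub h)))
  rw [hBg] at hβ
  rw [hBg'] at hβ'
  rw [LinearMap.add_apply, hBg, hBg'] at hγ
  rw [LinearMap.add_apply, hBg] at hδ
  rw [LinearMap.add_apply, LinearMap.add_apply, hBg, hBg'] at hε
  have hfne : f ≠ 0 := by rintro rfl; exact hf (Submodule.zero_mem _)
  have hAfne : A g + f ≠ 0 := by
    intro h; apply hf
    rw [eq_neg_of_add_eq_zero_right h]; exact Submodule.neg_mem _ hAg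
  have nf : ∀ z ∈ Submodule.span F {f, g}, f' ∉ Submodule.span F {z} := by
    intro z hz h
    exact hf' ((Submodule.span_singleton_le_iff_mem _ _).2 hz h)
  have e1 : γ = β' := smulRight_indep β' β γ f' f hfne (nf _ hfm) (by
    rw [← hβ, ← hβ', add_comm B', hγ, add_comm])
  have hf'ne : f' ≠ 0 := by rintro rfl; exact hf' (Submodule.zero_mem _)
  have sw : ∀ z, z ≠ 0 → f' ∉ Submodule.span F {z} → z ∉ Submodule.span F {f'} := by
    intro z hz h h2
    obtain ⟨c, rfl⟩ := Submodule.mem_span_singleton.1 h2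
    have hc : c ≠ 0 := by rintro rfl; simp at hz
    exact h (Submodule.mem_span_singleton.2 ⟨c⁻¹, by rw [smul_smul, inv_mul_cancel₀ hc, one_smul]⟩)
  have e2 : γ = β := smulRight_indep β β' γ f f' hf'ne (sw _ hfne (nf _ hfm)) (by
    rw [← hβ, ← hβ', hγ])
  have hm2 : A g + f ∈ Submodule.span F {f, g} := Submodule.add_mem _ hAgm hfm
  have e3 : ε = δ := smulRight_indep δ β' ε (A g + f) f' hf'ne (sw _ hAfne (nf _ hm2)) (by
    rw [← hδ, ← hβ', hε])
  have e4 : ε = β' := smulRight_indep β' δ ε f' (A g + f) hAfne (nf _ hm2) (by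
    rw [← hδ, ← hβ', add_comm f', add_comm B', hε])
  have e5 : δ = β := by rw [← e3, e4, ← e1, e2]
  refine ⟨A g, β, ?_⟩
  have : A + B = β.smulRight (A g) + B := by
    rw [hδ, e5, hβ]
    ext x; simp
  exact add_right_cancel this
end mainw2

section thmR
variable {F : Type*} [Field F] {n : ℕ}

def Par (a b : Fin n → F) : Prop := ∀ i k, a i * b k = a k * b i

lemma Par.symm {a b : Fin n → F} (h : Par a b) : Par b a := fun i k => by
  linear_combination h k i

lemma Par.exists_smul {a b : Fin n → F} (h : Par a b) (ha : a ≠ 0) : ∃ c : F, b = c • a := by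
  obtain ⟨i, hi⟩ := Function.ne_iff.1 ha
  simp only [Pi.zero_apply] at hi
  refine ⟨b i / a i, ?_⟩
  ext k
  have := h i k
  simp only [Pi.smul_apply, smul_eq_mul]
  field_simp
  linear_combination this

lemma par_smul (a : Fin n → F) (c : F) : Par a (c • a) := fun i k => by
  simp only [Pi.smul_apply, smul_eq_mul]; ring

lemma par_of_sum {a b a' b' c d : Fin n → F}
    (h : vecMulVec a b + vecMulVec a' b' = vecMulVec c d) : Par a a' ∨ Par b b' := by
  have hij : ∀ i j, a i * b j + a' i * b' j = c i * d j := fun i j => by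
    have := congrFun (congrFun h i) j
    simpa [vecMulVec_apply] using this
  by_contra! hc
  obtain ⟨h1, h2⟩ := hc
  unfold Par at h1 h2
  push Not at h1 h2
  obtain ⟨i, k, h1⟩ := h1
  obtain ⟨j, l, h2⟩ := h2
  have : (a i * a' k - a k * a' i) * (b j * b' l - b l * b' j) = 0 := by
    have e : (a i * b j + a' i * b' j) * (a k * b l + a' k * b' l)
      = (a i * b l + a' i * b' l) * (a k * b j + a' k * b' j) := by
      rw [hij, hij, hij, hij]; ring
    linear_combination e
  rcases mul_eq_zero.1 this with h | h
  · exact h1 (sub_eq_zero.1 h)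
  · exact h2 (sub_eq_zero.1 h)

lemma extract_left (ψ : (Fin n → F) →ₗ[F] Matrix (Fin n) (Fin n) F) (w : Fin n → F) (hw : w ≠ 0)
    (h : ∀ p, ∃ r, ψ p = vecMulVec w r) :
    ∃ R : (Fin n → F) →ₗ[F] (Fin n → F), ∀ p, ψ p = vecMulVec w (R p) := by
  obtain ⟨i, hi⟩ := Function.ne_iff.1 hw
  simp only [Pi.zero_apply] at hi
  refine ⟨{ toFun := fun p j => (w i)⁻¹ * ψ p i j
            map_add' := fun p q => by ext j; simp [mul_add]
            map_smul' := fun c p => by ext j; simp; ring }, fun p => ?_⟩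
  obtain ⟨r, hr⟩ := h p
  rw [hr]
  congr 1
  ext j
  simp [hr, vecMulVec_apply, hi]

/-- spaces of rank one matrices -/
lemma rankone_space (ψ : (Fin n → F) →ₗ[F] Matrix (Fin n) (Fin n) F) (hn : 2 ≤ n)
    (hψ : Function.Injective ψ) (h : ∀ p, ∃ a b, ψ p = vecMulVec a b) :
    (∃ w, w ≠ 0 ∧ ∃ R : (Fin n → F) →ₗ[F] (Fin n → F), ∀ p, ψ p = vecMulVec w (R p)) ∨
    (∃ w, w ≠ 0 ∧ ∃ R : (Fin n → F) →ₗ[F] (Fin n → F), ∀ p, ψ p = vecMulVec (R p) w) := by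
  have hnz : ∀ p, p ≠ 0 → ψ p ≠ 0 := fun p hp h0 => hp (hψ (by rw [h0, map_zero]))
  have key : ∀ p q a b a' b', ψ p = vecMulVec a b → ψ q = vecMulVec a' b' → Par a a' ∨ Par b b' := by
    intro p q a b a' b' h1 h2
    obtain ⟨c, d, h3⟩ := h (p + q)
    rw [map_add, h1, h2] at h3
    exact par_of_sum h3
  obtain ⟨p1, hp1⟩ : ∃ p1 : Fin n → F, p1 ≠ 0 := ⟨Pi.single ⟨0, by omega⟩ 1, by simp⟩
  obtain ⟨a1, b1, h1⟩ := h p1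
  have ha1 : a1 ≠ 0 := by rintro rfl; exact hnz p1 hp1 (by simp [h1])
  have hb1 : b1 ≠ 0 := by rintro rfl; exact hnz p1 hp1 (by simp [h1])
  by_cases hall : ∀ p, ∃ r, ψ p = vecMulVec a1 r
  · exact Or.inl ⟨a1, ha1, extract_left ψ a1 ha1 hall⟩
  right
  push Not at hall
  obtain ⟨p2, hp2⟩ := hall
  obtain ⟨a2, b2, h2⟩ := h p2
  have hb2 : b2 ≠ 0 := by rintro rfl; exact hp2 0 (by simp [h2])
  have hn12 : ¬ Par a1 a2 := by
    intro hP
    obtain ⟨c, rfl⟩ := hP.exists_smul ha1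
    exact hp2 (c • b2) (by rw [h2, smul_vecMulVec, vecMulVec_smul])
  have hb12 : Par b1 b2 := (key _ _ _ _ _ _ h1 h2).resolve_left hn12
  obtain ⟨c2, rfl⟩ := hb12.exists_smul hb1
  refine ⟨b1, hb1, ?_⟩
  have hall2 : ∀ p, ∃ r, ψ p = vecMulVec r b1 := by
    intro p
    obtain ⟨a, b, hp⟩ := h p
    by_cases ha0 : a = 0
    · exact ⟨0, by simp [hp, ha0]⟩
    by_cases hb : Par b1 b
    · obtain ⟨c, rfl⟩ := hb.exists_smul hb1
      exact ⟨c • a, by rw [hp, smul_vecMulVec, vecMulVec_smul]⟩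
    · exfalso
      have e1 := (key _ _ _ _ _ _ h1 hp).resolve_right hb
      have e2 := (key _ _ _ _ _ _ h2 hp).resolve_right (by
        intro hh
        apply hb
        have hc2 : c2 ≠ 0 := by rintro rfl; simp at hb2
        intro i k
        have := hh i k
        simp only [Pi.smul_apply, smul_eq_mul] at this
        exact mul_left_cancel₀ hc2 (by linear_combination this))
      obtain ⟨c, rfl⟩ := e1.exists_smul ha1
      have hc : c ≠ 0 := by rintro rfl; simp at ha0
      apply hn12
      intro i k
      have := e2 i k
      simp only [Pi.smul_apply, smul_eq_mul] at this
      exact mul_left_cancel₀ hc (by linear_combination -this)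
  obtain ⟨R, hR⟩ := extract_left ((transposeLinearEquiv (Fin n) (Fin n) F F).toLinearMap ∘ₗ ψ) b1 hb1 (by
    intro p
    obtain ⟨r, hr⟩ := hall2 p
    exact ⟨r, by simp [hr]⟩)
  refine ⟨R, fun p => ?_⟩
  have := congrArg transpose (hR p)
  simpa using this

def vmv (u : Fin n → F) : (Fin n → F) →ₗ[F] Matrix (Fin n) (Fin n) F :=
  { toFun := fun p => vecMulVec u p
    map_add' := fun p q => vecMulVec_add u p q
    map_smul' := fun c p => by simp [vecMulVec_smul] }

lemma vmv_apply (u p : Fin n → F) : vmv u p = vecMulVec u p := rfl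

lemma vmv_inj (u : Fin n → F) (hu : u ≠ 0) : Function.Injective (vmv u) := by
  rw [← LinearMap.ker_eq_bot, LinearMap.ker_eq_bot']
  intro p hp
  rw [vmv_apply, vecMulVec_eq_zero] at hp
  exact hp.resolve_left hu

lemma notall_par (hn : 2 ≤ n) (R : (Fin n → F) →ₗ[F] (Fin n → F)) (hR : Function.Injective R)
    (w : Fin n → F) : (Submodule.span F {w}).comap R ≠ ⊤ := by
  intro h
  have h1 : LinearMap.range R ≤ Submodule.span F {w} := by
    rintro _ ⟨x, rfl⟩
    have : x ∈ (Submodule.span F {w}).comap R := by rw [h]; trivial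
    exact this
  have h2 := Submodule.finrank_mono h1
  rw [LinearMap.finrank_range_of_inj hR] at h2
  have h3 := finrank_span_le_card (R := F) ({w} : Set (Fin n → F))
  simp at h2 h3
  omega
end thmR

section thmR2
variable {F : Type*} [Field F] {n : ℕ}

lemma notype_mix (hn : 2 ≤ n) (L : Matrix (Fin n) (Fin n) F →ₗ[F] Matrix (Fin n) (Fin n) F)
    (hL : Function.Injective L) (h : ∀ u p, ∃ a b, L (vecMulVec u p) = vecMulVec a b)
    (u u' : Fin n → F) (hu : u ≠ 0) (hu' : u' ≠ 0)
    (w w' : Fin n → F) (hw : w ≠ 0) (hw' : w' ≠ 0)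
    (R R' : (Fin n → F) →ₗ[F] (Fin n → F))
    (h1 : ∀ p, L (vecMulVec u p) = vecMulVec w (R p))
    (h2 : ∀ p, L (vecMulVec u' p) = vecMulVec (R' p) w') : False := by
  have hR : Function.Injective R := by
    intro p q e
    exact vmv_inj u hu (hL (by rw [vmv_apply, vmv_apply, h1, h1, e]))
  have hR' : Function.Injective R' := by
    intro p q e
    exact vmv_inj u' hu' (hL (by rw [vmv_apply, vmv_apply, h2, h2, e]))
  obtain ⟨p, hp1, hp2⟩ := exists_notMem_two _ _ (notall_par hn R hR w') (notall_par hn R' hR' w)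
  obtain ⟨c, d, hs⟩ := h (u + u') p
  rw [add_vecMulVec, map_add, h1, h2] at hs
  rcases par_of_sum hs with hP | hP
  · obtain ⟨c, hc⟩ := hP.exists_smul hw
    exact hp2 (Submodule.mem_span_singleton.2 ⟨c, hc.symm⟩)
  · obtain ⟨c, hc⟩ := hP.symm.exists_smul hw'
    exact hp1 (Submodule.mem_span_singleton.2 ⟨c, hc.symm⟩)

lemma sum_rows (Y : Matrix (Fin n) (Fin n) F) :
    Y = ∑ i, vecMulVec (Pi.single i 1) (Y i) := by
  ext a b
  simp [Matrix.sum_apply, vecMulVec_apply, Pi.single_apply]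

lemma thmR_one (hn : 2 ≤ n) (L : Matrix (Fin n) (Fin n) F →ₗ[F] Matrix (Fin n) (Fin n) F)
    (hL : Function.Injective L) (h : ∀ u p, ∃ a b, L (vecMulVec u p) = vecMulVec a b)
    (h1 : ∀ i : Fin n, ∃ w, w ≠ 0 ∧ ∃ R : (Fin n → F) →ₗ[F] (Fin n → F),
      ∀ p, L (vecMulVec (Pi.single i 1) p) = vecMulVec w (R p)) :
    ∃ Q R, ∀ Y, L Y = Q * Y * R := by
  choose w hw R hR using h1
  have hsn : ∀ i : Fin n, (Pi.single i 1 : Fin n → F) ≠ 0 := fun i => by simp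
  have hRi : ∀ i, Function.Injective (R i) := by
    intro i p q e
    exact vmv_inj _ (hsn i) (hL (by rw [vmv_apply, vmv_apply, hR, hR, e]))
  obtain ⟨i0⟩ : Nonempty (Fin n) := ⟨⟨0, by omega⟩⟩
  let e0 : (Fin n → F) ≃ₗ[F] (Fin n → F) := LinearEquiv.ofInjectiveEndo (R i0) (hRi i0)
  have he0 : ∀ x, e0 x = R i0 x := fun x => rfl
  have key : ∀ i, ∃ c : F, ∀ p, R i p = c • R i0 p := by
    intro i
    by_cases hi : i = i0
    · exact ⟨1, by simp [hi]⟩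
    have hnp : ¬ Par (w i0) (w i) := by
      intro hP
      obtain ⟨c, hc⟩ := hP.exists_smul (hw i0)
      obtain ⟨q, hq⟩ : ∃ q : Fin n → F, q ≠ 0 := ⟨_, hsn i0⟩
      have : L (vecMulVec (Pi.single i0 1) (e0.symm (-(c • R i q))) + vecMulVec (Pi.single i 1) q) = 0 := by
        rw [map_add, hR, hR, ← he0, LinearEquiv.apply_symm_apply, hc, vecMulVec_neg,
          smul_vecMulVec, vecMulVec_smul, neg_add_cancel]
      have := hL (this.trans (map_zero L).symm)
      apply hq
      ext k
      have := congrFun (congrFun this i) k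
      simpa [vecMulVec_apply, Pi.single_apply, hi] using this
    have hpar : ∀ p, Par (R i0 p) (R i p) := by
      intro p
      obtain ⟨c, d, hs⟩ := h (Pi.single i0 1 + Pi.single i 1) p
      rw [add_vecMulVec, map_add, hR, hR] at hs
      exact (par_of_sum hs).resolve_left hnp
    obtain ⟨c, hc⟩ := LinearMap.exists_eq_smul_id_of_forall_notLinearIndependent
      (f := e0.symm.toLinearMap ∘ₗ R i) (by
      intro v hv
      rw [LinearIndependent.pair_iff] at hv
      by_cases hv0 : v = 0
      · have := hv 1 0 (by simp [hv0])
        simp at this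
      obtain ⟨c, hc⟩ := (hpar v).exists_smul (fun h0 => hv0 (hRi i0 (by rw [h0, map_zero])))
      have := hv c (-1) (by
        simp only [LinearMap.comp_apply, LinearEquiv.coe_coe, hc, map_smul]
        rw [← he0, LinearEquiv.symm_apply_apply]; simp)
      simp at this)
    refine ⟨c, fun p => ?_⟩
    have := LinearMap.congr_fun hc p
    simp only [LinearMap.comp_apply, LinearEquiv.coe_coe] at this
    rw [LinearEquiv.symm_apply_eq] at this
    rw [this, he0]
    simp
  choose c hc using key
  refine ⟨Matrix.of fun j i => c i * w i j, (LinearMap.toMatrix' (R i0))ᵀ, fun Y => ?_⟩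
  conv_lhs => rw [sum_rows Y]
  rw [map_sum]
  have hRv : ∀ p j, R i0 p j = ∑ k, p k * LinearMap.toMatrix' (R i0) j k := by
    intro p j
    conv_lhs => rw [← LinearMap.toMatrix'_mulVec]
    simp [Matrix.mulVec, dotProduct, mul_comm]
  ext a b
  rw [Matrix.sum_apply, Matrix.mul_assoc, Matrix.mul_apply]
  refine Finset.sum_congr rfl fun i _ => ?_
  rw [hR, vecMulVec_apply, hc, Matrix.mul_apply]
  simp only [Pi.smul_apply, smul_eq_mul, hRv, Matrix.of_apply, Matrix.transpose_apply]
  ring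

lemma thmR (hn : 2 ≤ n) (L : Matrix (Fin n) (Fin n) F →ₗ[F] Matrix (Fin n) (Fin n) F)
    (hL : Function.Injective L) (h : ∀ u p, ∃ a b, L (vecMulVec u p) = vecMulVec a b) :
    ∃ Q R, (∀ Y, L Y = Q * Y * R) ∨ (∀ Y, L Y = Q * Yᵀ * R) := by
  have hsn : ∀ i : Fin n, (Pi.single i 1 : Fin n → F) ≠ 0 := fun i => by simp
  have hty : ∀ i : Fin n, _ := fun i => rankone_space (L ∘ₗ vmv (Pi.single i 1)) hn
    (hL.comp (vmv_inj _ (hsn i))) (fun p => h _ p)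
  obtain ⟨i0⟩ : Nonempty (Fin n) := ⟨⟨0, by omega⟩⟩
  rcases hty i0 with ⟨w, hw, R, hR⟩ | ⟨w, hw, R, hR⟩
  · obtain ⟨Q, R, hQ⟩ := thmR_one hn L hL h (fun i => by
      rcases hty i with h1 | ⟨w', hw', R', hR'⟩
      · exact h1
      · exact (notype_mix hn L hL h _ _ (hsn i0) (hsn i) w w' hw hw' R R' hR hR').elim)
    exact ⟨Q, R, Or.inl hQ⟩
  · have hLt : Function.Injective
        ((transposeLinearEquiv (Fin n) (Fin n) F F).toLinearMap ∘ₗ L) :=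
      (transposeLinearEquiv (Fin n) (Fin n) F F).injective.comp hL
    obtain ⟨Q, R, hQ⟩ := thmR_one hn
      ((transposeLinearEquiv (Fin n) (Fin n) F F).toLinearMap ∘ₗ L) hLt
      (fun u p => by
        obtain ⟨a, b, hab⟩ := h u p
        exact ⟨b, a, by simp [hab]⟩)
      (fun i => by
      rcases hty i with ⟨w', hw', R', hR'⟩ | ⟨w', hw', R', hR'⟩
      · exact (notype_mix hn L hL h _ _ (hsn i) (hsn i0) w' w hw' hw R' R hR' hR).elim
      · refine ⟨w', hw', R', fun p => ?_⟩
        have : L (vecMulVec (Pi.single i 1) p) = _ := hR' p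
        simp [this])
    refine ⟨Rᵀ, Qᵀ, Or.inr fun Y => ?_⟩
    have := congrArg transpose (hQ Y)
    simpa [Matrix.transpose_mul, Matrix.mul_assoc] using this
end thmR2

section adj
variable {F : Type*} [Field F] {n : ℕ}

lemma good_mem (h2 : (2 : F) ≠ 0) (X J : Module.End F (Fin n → F)) (hJ : J * J = 1)
    (hN : IsNilpotent (J * X - 1)) : LinearMap.toMatrix' X ∈ ProdInv3 F n := by
  obtain ⟨K, L, hK, hL, h⟩ := unip_two_inv h2 _ hN
  have hm : ∀ A B : Module.End F (Fin n → F), LinearMap.toMatrix' (A * B) =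
    LinearMap.toMatrix' A * LinearMap.toMatrix' B := fun A B => LinearMap.toMatrix'_mul A B
  refine ⟨LinearMap.toMatrix' J, LinearMap.toMatrix' K, LinearMap.toMatrix' L, ?_, ?_, ?_, ?_⟩
  · rw [← hm, hJ]; exact LinearMap.toMatrix'_one
  · rw [← hm, hK]; exact LinearMap.toMatrix'_one
  · rw [← hm, hL]; exact LinearMap.toMatrix'_one
  · rw [mul_assoc, ← hm, ← hm, ← h]
    rw [add_sub_cancel, ← mul_assoc, hJ, one_mul]

lemma ProdInv3.isUnit {A : Matrix (Fin n) (Fin n) F} (h : A ∈ ProdInv3 F n) : IsUnit A := by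
  obtain ⟨J, K, L, hJ, hK, hL, rfl⟩ := h
  exact ((IsUnit.of_mul_eq_one _ hJ).mul (IsUnit.of_mul_eq_one _ hK)).mul (IsUnit.of_mul_eq_one _ hL)

/-- the adjoint with respect to the trace form -/
def adjT (T : Matrix (Fin n) (Fin n) F →ₗ[F] Matrix (Fin n) (Fin n) F) :
    Matrix (Fin n) (Fin n) F →ₗ[F] Matrix (Fin n) (Fin n) F where
  toFun Y := Matrix.of fun i j => trace (Y * T (Matrix.single j i 1))
  map_add' Y Z := by ext i j; simp [add_mul]
  map_smul' c Y := by ext i j; simp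

lemma adjT_trace (T : Matrix (Fin n) (Fin n) F →ₗ[F] Matrix (Fin n) (Fin n) F)
    (Y X : Matrix (Fin n) (Fin n) F) : trace (adjT T Y * X) = trace (Y * T X) := by
  conv_rhs => rw [matrix_eq_sum_single X]
  simp only [map_sum, Finset.mul_sum, trace_sum]
  rw [Finset.sum_comm, Matrix.trace]
  refine Finset.sum_congr rfl fun i _ => ?_
  rw [Matrix.diag_apply, Matrix.mul_apply]
  refine Finset.sum_congr rfl fun j _ => ?_
  have : Matrix.single j i (X j i) = X j i • Matrix.single j i 1 := by simp
  rw [this, map_smul, Matrix.mul_smul, trace_smul]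
  simp [adjT, mul_comm]

lemma trace_ext {A B : Matrix (Fin n) (Fin n) F} (h : ∀ X, trace (X * A) = trace (X * B)) : A = B := by
  ext i j
  have := h (Matrix.single j i 1)
  simpa [Matrix.trace_single_mul] using this

lemma adjT_inj (T : Matrix (Fin n) (Fin n) F →ₗ[F] Matrix (Fin n) (Fin n) F)
    (hT : Function.Surjective T) : Function.Injective (adjT T) := by
  intro Y Z h
  apply trace_ext
  intro X
  obtain ⟨X, rfl⟩ := hT X
  rw [trace_mul_comm, ← adjT_trace, h, adjT_trace, trace_mul_comm]

lemma adjT_rankone (h2 : (2 : F) ≠ 0) (hn : 3 ≤ n)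
    (T : Matrix (Fin n) (Fin n) F →ₗ[F] Matrix (Fin n) (Fin n) F)
    (hT : Function.Surjective T) (hC : ∀ A ∈ ProdInv3 F n, T A ∈ ProdInv3 F n)
    (u p : Fin n → F) : ∃ a b, adjT T (vecMulVec u p) = vecMulVec a b := by
  by_cases hu : u = 0
  · exact ⟨0, 0, by simp [hu]⟩
  let ψ : (Fin n → F) →ₗ[F] Module.End F (Fin n → F) :=
    (Matrix.toLin' (R := F)).toLinearMap ∘ₗ adjT T ∘ₗ vmv u
  have hψ : ∀ p, ψ p = Matrix.toLin' (adjT T (vecMulVec u p)) := fun p => rfl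
  have hψi : Function.Injective ψ :=
    (Matrix.toLin' (R := F)).injective.comp ((adjT_inj T hT).comp (vmv_inj u hu))
  have hfr : Module.finrank F (LinearMap.range ψ) = Module.finrank F (Fin n → F) :=
    LinearMap.finrank_range_of_inj hψi
  have hbad : ¬ GoodSpace (LinearMap.range ψ) := by
    rintro ⟨X, J, hJ, hN, htr⟩
    have hX := hC _ (good_mem h2 X J hJ hN)
    have h0 : ∀ p, p ⬝ᵥ (T (LinearMap.toMatrix' X) *ᵥ u) = 0 := by
      intro p
      have h1 := htr _ ⟨p, rfl⟩
      rw [hψ] at h1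
      have e : Matrix.toLin' (adjT T (vecMulVec u p)) * X =
          Matrix.toLin' (adjT T (vecMulVec u p) * LinearMap.toMatrix' X) := by
        rw [Matrix.toLin'_mul, Matrix.toLin'_toMatrix']; rfl
      rw [e, Matrix.trace_toLin'_eq, adjT_trace, trace_mul_comm, mul_vecMulVec,
        trace_vecMulVec, dotProduct_comm] at h1
      exact h1
    have h3 : T (LinearMap.toMatrix' X) *ᵥ u = 0 := dotProduct_eq_zero _ (fun p => by
      rw [dotProduct_comm]; exact h0 p)
    apply hu
    have hi := Matrix.mulVec_injective_iff_isUnit.2 (ProdInv3.isUnit hX)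
    exact hi (by rw [h3, mulVec_zero])
  obtain ⟨v, l, hvl⟩ := main_W (by simpa using hn) _ hfr hbad (ψ p) ⟨p, rfl⟩
  refine ⟨v, fun j => l (Pi.single j 1), ?_⟩
  rw [hψ] at hvl
  have := congrArg LinearMap.toMatrix' hvl
  rw [LinearMap.toMatrix'_toLin'] at this
  rw [this]
  ext i j
  simp [LinearMap.toMatrix'_apply, vecMulVec_apply, mul_comm]

lemma forward_ge3 (h2 : (2 : F) ≠ 0) (hn : 3 ≤ n)
    (T : Matrix (Fin n) (Fin n) F →ₗ[F] Matrix (Fin n) (Fin n) F)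
    (hT : Function.Surjective T) (hC : ∀ A ∈ ProdInv3 F n, T A ∈ ProdInv3 F n) :
    ∃ Q R, (∀ Y, T Y = Q * Y * R) ∨ (∀ Y, T Y = Q * Yᵀ * R) := by
  obtain ⟨Q, R, h | h⟩ := thmR (by omega) (adjT T) (adjT_inj T hT)
    (fun u p => adjT_rankone h2 hn T hT hC u p)
  · refine ⟨R, Q, Or.inl fun X => trace_ext fun Y => ?_⟩
    rw [← adjT_trace, h, mul_assoc, mul_assoc, trace_mul_comm]
    simp only [mul_assoc]
  · refine ⟨Qᵀ, Rᵀ, Or.inr fun X => trace_ext fun Y => ?_⟩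
    rw [← adjT_trace, h, ← trace_transpose, trace_mul_comm]
    simp only [transpose_mul, transpose_transpose, mul_assoc]
    rw [trace_mul_comm]
    simp only [mul_assoc]
    rw [trace_mul_comm]
    simp only [mul_assoc]
    rw [trace_mul_comm]
    simp only [mul_assoc]

lemma finish (T : Matrix (Fin n) (Fin n) F →ₗ[F] Matrix (Fin n) (Fin n) F) (h1 : T 1 = 1)
    (h : ∃ Q R, (∀ Y, T Y = Q * Y * R) ∨ (∀ Y, T Y = Q * Yᵀ * R)) :
    ∃ P : Matrix (Fin n) (Fin n) F, IsUnit P ∧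
        ((∀ X, T X = P * X * P⁻¹) ∨ (∀ X, T X = P * Xᵀ * P⁻¹)) := by
  obtain ⟨Q, R, h | h⟩ := h
  · have hQR : Q * R = 1 := by rw [← h1, h, mul_one]
    exact ⟨Q, IsUnit.of_mul_eq_one _ hQR, Or.inl fun X => by
      rw [Matrix.inv_eq_right_inv hQR, h]⟩
  · have hQR : Q * R = 1 := by rw [← h1, h, transpose_one, mul_one]
    exact ⟨Q, IsUnit.of_mul_eq_one _ hQR, Or.inr fun X => by
      rw [Matrix.inv_eq_right_inv hQR, h]⟩

lemma converse (T : Matrix (Fin n) (Fin n) F →ₗ[F] Matrix (Fin n) (Fin n) F)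
    (h : ∃ P : Matrix (Fin n) (Fin n) F, IsUnit P ∧
        ((∀ X, T X = P * X * P⁻¹) ∨ (∀ X, T X = P * Xᵀ * P⁻¹))) :
    T 1 = 1 ∧ ∀ A ∈ ProdInv3 F n, T A ∈ ProdInv3 F n := by
  obtain ⟨P, hP, h⟩ := h
  have hd : IsUnit P.det := (Matrix.isUnit_iff_isUnit_det P).1 hP
  have e1 : P * P⁻¹ = 1 := mul_nonsing_inv P hd
  have e2 : P⁻¹ * P = 1 := nonsing_inv_mul P hd
  have hc : ∀ A B : Matrix (Fin n) (Fin n) F, P * A * P⁻¹ * (P * B * P⁻¹) = P * (A * B) * P⁻¹ := by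
    intro A B
    calc _ = P * A * (P⁻¹ * P) * B * P⁻¹ := by simp only [mul_assoc]
      _ = _ := by rw [e2, mul_one]; simp only [mul_assoc]
  rcases h with h | h
  · refine ⟨by rw [h, mul_one, e1], ?_⟩
    rintro _ ⟨J, K, L, hJ, hK, hL, rfl⟩
    refine ⟨P * J * P⁻¹, P * K * P⁻¹, P * L * P⁻¹, ?_, ?_, ?_, ?_⟩
    · rw [hc, hJ, mul_one, e1]
    · rw [hc, hK, mul_one, e1]
    · rw [hc, hL, mul_one, e1]
    · rw [hc, hc, h]
  · refine ⟨by rw [h, transpose_one, mul_one, e1], ?_⟩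
    rintro _ ⟨J, K, L, hJ, hK, hL, rfl⟩
    refine ⟨P * Lᵀ * P⁻¹, P * Kᵀ * P⁻¹, P * Jᵀ * P⁻¹, ?_, ?_, ?_, ?_⟩
    · rw [hc, ← transpose_mul, hL, transpose_one, mul_one, e1]
    · rw [hc, ← transpose_mul, hK, transpose_one, mul_one, e1]
    · rw [hc, ← transpose_mul, hJ, transpose_one, mul_one, e1]
    · rw [hc, hc, h, transpose_mul, transpose_mul, mul_assoc Lᵀ]
end adj

section two
variable {F : Type*} [Field F]

lemma sing2 (N : Matrix (Fin 2) (Fin 2) F) (h : N.det = 0) : ∃ a b, N = vecMulVec a b := by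
  rw [det_fin_two] at h
  by_cases h0 : N 0 0 = 0 ∧ N 0 1 = 0
  · refine ⟨![0, 1], N 1, ?_⟩
    ext i j
    fin_cases i <;> fin_cases j <;> simp [vecMulVec_apply, h0.1, h0.2]
  · by_cases h00 : N 0 0 = 0
    · have h01 : N 0 1 ≠ 0 := fun h' => h0 ⟨h00, h'⟩
      refine ⟨![1, N 1 1 / N 0 1], N 0, ?_⟩
      ext i j
      fin_cases i <;> fin_cases j <;> simp [vecMulVec_apply] <;> field_simp <;> linear_combination -h
    · refine ⟨![1, N 1 0 / N 0 0], N 0, ?_⟩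
      ext i j
      fin_cases i <;> fin_cases j <;> simp [vecMulVec_apply] <;> field_simp <;> linear_combination h

lemma det_vmv2 (a b : Fin 2 → F) : (vecMulVec a b).det = 0 := by
  rw [det_fin_two]; simp [vecMulVec_apply]; ring

lemma good_mem_mat {n : ℕ} (h2 : (2 : F) ≠ 0) (J N : Matrix (Fin n) (Fin n) F) (hJ : J * J = 1)
    (hN : (J * N) * (J * N) = 0) : J + N ∈ ProdInv3 F n := by
  have hm : ∀ A B : Matrix (Fin n) (Fin n) F, (toLin' A : Module.End F (Fin n → F)) * toLin' B
    = toLin' (A * B) := fun A B => (toLin'_mul A B).symm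
  have := good_mem h2 (toLin' (J + N)) (toLin' J) (by rw [hm, hJ]; exact toLin'_one) ⟨2, by
    have e : (toLin' J : Module.End F (Fin n → F)) * toLin' (J + N) - 1 = toLin' (J * N) := by
      rw [hm, mul_add, hJ, map_add, toLin'_one]
      exact add_sub_cancel_left _ _
    rw [e, pow_two, hm, hN, map_zero]⟩
  rwa [LinearMap.toMatrix'_toLin'] at this

lemma exists_J (a b : Fin 2 → F) : ∃ J : Matrix (Fin 2) (Fin 2) F, J * J = 1 ∧ b ⬝ᵥ (J *ᵥ a) = 0 := by
  by_cases hβ : b 0 * a 1 = 0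
  · by_cases hγ : b 1 * a 0 = 0
    · refine ⟨!![0, 1; 1, 0], by simp [Matrix.mul_fin_two, Matrix.one_fin_two], ?_⟩
      simp [dotProduct, mulVec, Fin.sum_univ_two]
      rw [hβ, hγ, add_zero]
    · have hb : b 1 ≠ 0 := left_ne_zero_of_mul hγ
      have ha : a 0 ≠ 0 := right_ne_zero_of_mul hγ
      refine ⟨!![1, 0; -(b 0 * a 0 - b 1 * a 1) / (b 1 * a 0), -1], ?_, ?_⟩
      · simp [Matrix.mul_fin_two, Matrix.one_fin_two]
      · simp [dotProduct, mulVec, Fin.sum_univ_two]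
        field_simp
        ring
  · have hb : b 0 ≠ 0 := left_ne_zero_of_mul hβ
    have ha : a 1 ≠ 0 := right_ne_zero_of_mul hβ
    refine ⟨!![1, -(b 0 * a 0 - b 1 * a 1) / (b 0 * a 1); 0, -1], ?_, ?_⟩
    · simp [Matrix.mul_fin_two, Matrix.one_fin_two]
    · simp [dotProduct, mulVec, Fin.sum_univ_two]
      field_simp
      ring

lemma det_sq {n : ℕ} {A : Matrix (Fin n) (Fin n) F} (h : A ∈ ProdInv3 F n) : A.det ^ 2 = 1 := by
  obtain ⟨J, K, L, hJ, hK, hL, rfl⟩ := h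
  have a1 := congrArg det hJ
  have a2 := congrArg det hK
  have a3 := congrArg det hL
  rw [det_mul, det_one] at a1 a2 a3
  rw [det_mul, det_mul]
  calc _ = (J.det * J.det) * (K.det * K.det) * (L.det * L.det) := by ring
    _ = 1 := by rw [a1, a2, a3]; ring

open Polynomial in
lemma quad_const (hF : ¬ (Finite F ∧ Nat.card F ≤ 4)) (d s m : F)
    (h : ∀ t : F, (d + s * t + m * t ^ 2) ^ 2 = 1) : m = 0 := by
  by_contra hm
  set q : F[X] := (C m * X ^ 2 + C s * X + C d) ^ 2 - 1 with hq
  have hdeg : (C m * X ^ 2 + C s * X + C d).natDegree = 2 := natDegree_quadratic hm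
  have hq4 : q.natDegree = 4 := by
    rw [hq, natDegree_sub_eq_left_of_natDegree_lt, natDegree_pow, hdeg]
    rw [natDegree_pow, hdeg]; simp
  have hq0 : q ≠ 0 := by intro h0; rw [h0] at hq4; simp at hq4
  have hroot : ∀ t, t ∈ q.roots := by
    intro t
    rw [mem_roots hq0, IsRoot.def, hq]
    simp only [eval_sub, eval_pow, eval_add, eval_mul, eval_C, eval_X, eval_one]
    rw [sub_eq_zero, ← h t]; ring
  classical
  have huniv : (Set.univ : Set F) = (q.roots.toFinset : Set F) := by
    ext t; simpa using hroot t
  have hfin : Finite F := by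
    rw [← Set.finite_univ_iff, huniv]; exact Finset.finite_toSet _
  apply hF
  refine ⟨hfin, ?_⟩
  rw [← Set.ncard_univ, huniv, Set.ncard_coe_finset]
  calc _ ≤ q.roots.card := Multiset.toFinset_card_le _
    _ ≤ 4 := by rw [← hq4]; exact card_roots' q

lemma det_zero_big (h2 : (2 : F) ≠ 0) (hF : ¬ (Finite F ∧ Nat.card F ≤ 4))
    (T : Matrix (Fin 2) (Fin 2) F →ₗ[F] Matrix (Fin 2) (Fin 2) F)
    (hC : ∀ A ∈ ProdInv3 F 2, T A ∈ ProdInv3 F 2) (a b : Fin 2 → F) :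
    (T (vecMulVec a b)).det = 0 := by
  obtain ⟨J, hJ, hJab⟩ := exists_J a b
  have hmem : ∀ t : F, J + t • vecMulVec a b ∈ ProdInv3 F 2 := by
    intro t
    apply good_mem_mat h2 J _ hJ
    rw [Matrix.mul_smul, Matrix.smul_mul, Matrix.mul_smul, mul_vecMulVec, vecMulVec_mul_vecMulVec, hJab]
    simp
  set N' := T (vecMulVec a b)
  set J' := T J
  refine quad_const hF J'.det (J' 0 0 * N' 1 1 + N' 0 0 * J' 1 1 - J' 0 1 * N' 1 0 - N' 0 1 * J' 1 0) _ ?_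
  intro t
  rw [← det_sq (hC _ (hmem t)), map_add, map_smul]
  congr 1
  simp only [det_fin_two, Matrix.add_apply, Matrix.smul_apply, smul_eq_mul, N', J']
  ring

lemma conj_mem {n : ℕ} (P A : Matrix (Fin n) (Fin n) F) (hP : IsUnit P) (hA : A ∈ ProdInv3 F n) :
    P * A * P⁻¹ ∈ ProdInv3 F n := by
  have := (converse (LinearMap.mulRight F P⁻¹ ∘ₗ LinearMap.mulLeft F P)
    ⟨P, hP, Or.inl fun X => by simp⟩).2 A hA
  simpa using this

lemma comp_mem (d t : F) (hd : d = 1 ∨ d = -1) : !![0, -d; 1, t] ∈ ProdInv3 F 2 := by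
  rcases hd with rfl | rfl
  · refine ⟨!![0, 1; 1, 0], !![1, t; 0, -1], 1, ?_, ?_, ?_, ?_⟩ <;>
      simp [Matrix.mul_fin_two, Matrix.one_fin_two]
  · refine ⟨!![0, 1; 1, 0], !![1, 0; 0, -1], !![1, t; 0, -1], ?_, ?_, ?_, ?_⟩ <;>
      simp [Matrix.mul_fin_two, Matrix.one_fin_two]

lemma mem_of_cyclic (A : Matrix (Fin 2) (Fin 2) F) (hd : A.det = 1 ∨ A.det = -1) (x y : F)
    (h : x * (A 1 0 * x + A 1 1 * y) - (A 0 0 * x + A 0 1 * y) * y ≠ 0) : A ∈ ProdInv3 F 2 := by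
  set P : Matrix (Fin 2) (Fin 2) F := !![x, A 0 0 * x + A 0 1 * y; y, A 1 0 * x + A 1 1 * y] with hPdef
  have hdet : IsUnit P.det := by rw [hPdef, det_fin_two_of]; exact h.isUnit
  have hP : IsUnit P := (Matrix.isUnit_iff_isUnit_det P).2 hdet
  have hm := conj_mem P _ hP (comp_mem A.det A.trace hd)
  have e : A * P = P * !![0, -A.det; 1, A.trace] := by
    rw [det_fin_two, trace_fin_two, hPdef]
    ext i j
    fin_cases i <;> fin_cases j <;> simp [Matrix.mul_apply, Fin.sum_univ_two] <;> ring
  rwa [← e, mul_assoc, mul_nonsing_inv P hdet, mul_one] at hm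

lemma mem_three (h3 : ∀ x : F, x = 0 ∨ x = 1 ∨ x = -1) (A : Matrix (Fin 2) (Fin 2) F)
    (hA : A.det ≠ 0) : A ∈ ProdInv3 F 2 := by
  have hd : A.det = 1 ∨ A.det = -1 := (h3 _).resolve_left hA
  by_cases hc : A 1 0 = 0
  · by_cases hb : A 0 1 = 0
    · by_cases he : A 0 0 = A 1 1
      · have hA1 : A 0 0 = 1 ∨ A 0 0 = -1 := (h3 _).resolve_left (by
          intro h0; apply hA; rw [det_fin_two, h0, hc]; ring)
        refine ⟨A, 1, 1, ?_, by simp, by simp, by simp⟩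
        ext i j
        rcases hA1 with h1 | h1 <;>
        fin_cases i <;> fin_cases j <;> simp [Matrix.mul_apply, Fin.sum_univ_two, hc, hb, ← he, h1]
      · exact mem_of_cyclic A hd 1 1 (by
          rw [hc, hb]; intro h; apply he; linear_combination -h)
    · exact mem_of_cyclic A hd 0 1 (by simpa using hb)
  · exact mem_of_cyclic A hd 1 0 (by simpa using hc)

lemma det_zero_three (hfin : Finite F) (h3 : ∀ x : F, x = 0 ∨ x = 1 ∨ x = -1)
    (T : Matrix (Fin 2) (Fin 2) F →ₗ[F] Matrix (Fin 2) (Fin 2) F) (hT : Function.Injective T)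
    (hC : ∀ A ∈ ProdInv3 F 2, T A ∈ ProdInv3 F 2) (a b : Fin 2 → F) :
    (T (vecMulVec a b)).det = 0 := by
  by_contra hne
  have : Finite (Matrix (Fin 2) (Fin 2) F) := inferInstanceAs (Finite (Fin 2 → Fin 2 → F))
  have hs : Function.Surjective (fun A : ProdInv3 F 2 => (⟨T A, hC A A.2⟩ : ProdInv3 F 2)) := by
    apply Finite.surjective_of_injective
    intro A B h
    exact Subtype.ext (hT (congrArg Subtype.val h))
  obtain ⟨⟨A, hA⟩, hAT⟩ := hs ⟨T (vecMulVec a b), mem_three h3 _ hne⟩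
  have := hT (congrArg Subtype.val hAT)
  simp only at this
  have h1 := det_sq hA
  rw [this, det_vmv2] at h1
  simp at h1

lemma small_field (h2 : (2 : F) ≠ 0) (hF : Finite F ∧ Nat.card F ≤ 4) (x : F) :
    x = 0 ∨ x = 1 ∨ x = -1 := by
  obtain ⟨hfin, hc⟩ := hF
  classical
  have := Fintype.ofFinite F
  rw [Nat.card_eq_fintype_card] at hc
  have hne : (1 : F) ≠ -1 := fun h => h2 (by linear_combination h)
  by_contra! hx
  obtain ⟨hx0, hx1, hx2⟩ := hx
  have hxn : x ≠ -x := fun h => by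
    have : 2 * x = 0 := by linear_combination h
    rcases mul_eq_zero.1 this with h | h
    · exact h2 h
    · exact hx0 h
  have hcard : ({0, 1, -1, x, -x} : Finset F).card = 5 := by
    rw [Finset.card_insert_of_notMem, Finset.card_insert_of_notMem, Finset.card_insert_of_notMem,
      Finset.card_insert_of_notMem, Finset.card_singleton]
    · simpa using hxn
    · simp only [Finset.mem_insert, Finset.mem_singleton, not_or]
      exact ⟨fun h => hx2 h.symm, fun h => hx1 (neg_injective h).symm⟩
    · simp only [Finset.mem_insert, Finset.mem_singleton, not_or]
      exact ⟨hne, fun h => hx1 h.symm, fun h => hx2 (by rw [h, neg_neg])⟩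
    · simp only [Finset.mem_insert, Finset.mem_singleton, not_or]
      exact ⟨zero_ne_one, fun h => one_ne_zero (neg_eq_zero.1 h.symm), fun h => hx0 h.symm,
        fun h => hx0 (neg_eq_zero.1 h.symm)⟩
  have := Finset.card_le_univ ({0, 1, -1, x, -x} : Finset F)
  omega

lemma forward_two (h2 : (2 : F) ≠ 0)
    (T : Matrix (Fin 2) (Fin 2) F →ₗ[F] Matrix (Fin 2) (Fin 2) F) (hT : Function.Injective T)
    (hC : ∀ A ∈ ProdInv3 F 2, T A ∈ ProdInv3 F 2) :
    ∃ Q R, (∀ Y, T Y = Q * Y * R) ∨ (∀ Y, T Y = Q * Yᵀ * R) := by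
  refine thmR le_rfl T hT fun u p => sing2 _ ?_
  by_cases hF : Finite F ∧ Nat.card F ≤ 4
  · exact det_zero_three hF.1 (small_field h2 hF) T hT hC u p
  · exact det_zero_big h2 hF T hC u p
end two

theorem stmt1 (F : Type*) [Field F] (hchar : ringChar F ≠ 2) (n : ℕ) (hn : 2 ≤ n)
    (T : Matrix (Fin n) (Fin n) F →ₗ[F] Matrix (Fin n) (Fin n) F)
    (hT : Function.Bijective T) :
    (T 1 = 1 ∧ ∀ A ∈ ProdInv3 F n, T A ∈ ProdInv3 F n) ↔
      ∃ P : Matrix (Fin n) (Fin n) F, IsUnit P ∧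
        ((∀ X, T X = P * X * P⁻¹) ∨ (∀ X, T X = P * Xᵀ * P⁻¹)) := by
  have h2 : (2 : F) ≠ 0 := Ring.two_ne_zero hchar
  refine ⟨fun ⟨h1, hC⟩ => finish T h1 ?_, converse T⟩
  rcases Nat.lt_or_ge n 3 with h | h
  · obtain rfl : n = 2 := by omega
    exact forward_two h2 T hT.1 hC
  · exact forward_ge3 h2 h T hT.2 hC
end

section
/- Let F be a field, let n ≥ 2, and let g(x) be a monic polynomial of degree n over F with g(0) ≠ 0 such that g is not a power of a self-reciprocal irreducible monic polynomial. Let A = C_g ⊕ C_{g̃} ∈ M_{2n}(F), where C_g and C_{g̃} are the companion matrices of g and of its reciprocal g̃, respectively (so A ∈ B_{2n}). Then there exists a strictly upper triangular matrix N ∈ M_{2n}(F) such that A(I + N) ∉ B_{2n}. -/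
open Matrix Polynomial

/-- The set of matrices that are products of two involutions. -/
def ProdInv2 (F : Type*) [Field F] (n : ℕ) : Set (Matrix (Fin n) (Fin n) F) :=
  {A | ∃ J₁ J₂ : Matrix (Fin n) (Fin n) F, J₁ * J₁ = 1 ∧ J₂ * J₂ = 1 ∧ A = J₁ * J₂}

/-- The companion matrix of a monic polynomial of degree `n`: entries `1` in positions
`(i+1, i)`, last column `(-a₀, …, -a_{n-1})ᵗ`, zeros elsewhere. -/
def companionMatrix {F : Type*} [Field F] (n : ℕ) (f : Polynomial F) :
    Matrix (Fin n) (Fin n) F :=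
  fun i j => (if (i : ℕ) = (j : ℕ) + 1 then 1 else 0) +
    (if (j : ℕ) + 1 = n then -(f.coeff i) else 0)

/-- The reciprocal polynomial `f̃(x) = a₀⁻¹ · xⁿ · f(1/x)`. -/
noncomputable def reciprocalPoly {F : Type*} [Field F] (f : Polynomial F) : Polynomial F :=
  Polynomial.C (f.coeff 0)⁻¹ * f.reverse


/-- If `A` and `A (1 + E_{ij})` are both products of two involutions, then `A` has an inverse
`B` with `A j i = - B j i`. -/
lemma key_trace {F : Type*} [Field F] {m : ℕ} (A : Matrix (Fin m) (Fin m) F) (i j : Fin m)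
    (hij : i ≠ j) (h0 : A ∈ ProdInv2 F m)
    (h1 : A * (1 + Matrix.single i j 1) ∈ ProdInv2 F m) :
    ∃ B : Matrix (Fin m) (Fin m) F, B * A = 1 ∧ A j i = - B j i := by
  obtain ⟨J₁, J₂, h1', h2', hA⟩ := h0
  obtain ⟨K₁, K₂, k1, k2, hM⟩ := h1
  have hBA : (J₂ * J₁) * A = 1 := by
    rw [hA, Matrix.mul_assoc, ← Matrix.mul_assoc J₁ J₁, h1', Matrix.one_mul, h2']
  have hM' : (K₂ * K₁) * (A * (1 + Matrix.single i j 1)) = 1 := by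
    rw [hM, Matrix.mul_assoc, ← Matrix.mul_assoc K₁ K₁, k1, Matrix.one_mul, k2]
  have hE : (Matrix.single i j (1 : F)) * Matrix.single i j 1 = 0 := by
    simp [hij.symm]
  have hAB : A * (J₂ * J₁) = 1 := mul_eq_one_comm.mp hBA
  have hK : K₂ * K₁ = (1 - Matrix.single i j 1) * (J₂ * J₁) := by
    refine left_inv_eq_right_inv hM' ?_
    have : (1 + Matrix.single i j (1 : F)) * (1 - Matrix.single i j 1) = 1 := by
      rw [Matrix.add_mul, Matrix.mul_sub, Matrix.mul_sub, hE]; simp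
    rw [Matrix.mul_assoc, ← Matrix.mul_assoc (1 + Matrix.single i j (1 : F)), this,
      Matrix.one_mul, hAB]
  have t1 : A.trace = (J₂ * J₁).trace := by rw [hA, Matrix.trace_mul_comm]
  have t2 : (A * (1 + Matrix.single i j 1)).trace =
      ((1 - Matrix.single i j 1) * (J₂ * J₁)).trace := by
    rw [hM, ← hK, Matrix.trace_mul_comm]
  refine ⟨J₂ * J₁, hBA, ?_⟩
  generalize J₂ * J₁ = B at *
  rw [Matrix.mul_add, Matrix.sub_mul, Matrix.trace_add, Matrix.trace_sub, Matrix.mul_one,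
    Matrix.one_mul, t1, Matrix.trace_mul_comm A, Matrix.trace_single_mul,
    Matrix.trace_single_mul] at t2
  simp only [smul_eq_mul, one_mul, one_smul] at t2
  linear_combination t2

/-- Minimal polynomial obstruction. -/
lemma key_minpoly {F : Type*} [Field F] {m : ℕ} (M : Matrix (Fin m) (Fin m) F) (c d : F)
    (hcd : c * d = 1) (hne : c ≠ d)
    (hM : (M + c • 1) * (M + c • 1) * (M + d • 1) = 0)
    (hM2 : (M + c • 1) * (M + d • 1) ≠ 0) : M ∉ ProdInv2 F m := by
  rintro ⟨J₁, J₂, h1, h2, hA⟩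
  have hJ : J₁ * M * J₁ = J₂ * J₁ := by
    rw [hA, ← Matrix.mul_assoc, h1, Matrix.one_mul]
  have hMB : M * (J₂ * J₁) = 1 := by
    rw [hA, Matrix.mul_assoc, ← Matrix.mul_assoc J₂ J₂, h2, Matrix.one_mul, h1]
  have hconj : ∀ e : F, J₁ * (M + e • 1) * J₁ = J₂ * J₁ + e • 1 := by
    intro e
    rw [Matrix.mul_add, Matrix.add_mul, hJ]
    simp [h1]
  generalize J₂ * J₁ = B at *
  have hBM : B * M = 1 := mul_eq_one_comm.mp hMB
  have hB : (B + c • 1) * (B + c • 1) * (B + d • 1) = 0 := by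
    rw [← hconj c, ← hconj d]
    calc _ = J₁ * (M + c • 1) * (J₁ * J₁) * (M + c • 1) * (J₁ * J₁) * (M + d • 1) * J₁ := by
          simp only [Matrix.mul_assoc]
      _ = J₁ * ((M + c • 1) * (M + c • 1) * (M + d • 1)) * J₁ := by
          rw [h1]; simp only [Matrix.mul_assoc, Matrix.one_mul]
      _ = 0 := by rw [hM]; simp
  have e1 : ∀ e f : F, e * f = 1 → M * (B + e • 1) = e • (M + f • 1) := by
    intro e f hef
    rw [Matrix.mul_add, hMB, smul_add, smul_smul, hef]
    simp [add_comm]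
  have comm : ∀ e : F, (B + e • 1) * M = M * (B + e • 1) := by
    intro e
    rw [Matrix.mul_add, Matrix.add_mul, hMB, hBM]; simp
  have hM3 : (M + d • 1) * (M + d • 1) * (M + c • 1) = 0 := by
    have hz : (M * (B + c • 1)) * (M * (B + c • 1)) * (M * (B + d • 1)) = 0 := by
      have hs : ∀ Y, (B + c • 1) * (M * Y) = M * ((B + c • 1) * Y) := by
        intro Y
        rw [← Matrix.mul_assoc, comm c, Matrix.mul_assoc]
      rw [Matrix.mul_assoc] at hB
      simp only [Matrix.mul_assoc, hs, hB, Matrix.mul_zero]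
    rw [e1 c d hcd, e1 d c (by rw [mul_comm, hcd])] at hz
    simp only [Matrix.smul_mul, Matrix.mul_smul, smul_smul, smul_eq_zero] at hz
    rcases hz with hz | hz
    · exfalso
      have hc : c ≠ 0 := left_ne_zero_of_mul_eq_one hcd
      have hd : d ≠ 0 := right_ne_zero_of_mul_eq_one hcd
      simp_all
    · exact hz
  have hcomm : (M + d • 1) * (M + c • 1) = (M + c • 1) * (M + d • 1) := by
    simp only [Matrix.mul_add, Matrix.add_mul, Matrix.smul_mul, Matrix.mul_smul,
      Matrix.one_mul, Matrix.mul_one, smul_add, smul_smul, mul_comm c d]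
    abel
  apply hM2
  have hfin : (c - d) • ((M + c • 1) * (M + d • 1)) = 0 := by
    calc _ = ((c - d) • (1 : Matrix (Fin m) (Fin m) F)) * ((M + c • 1) * (M + d • 1)) := by simp
      _ = ((M + c • 1) - (M + d • 1)) * ((M + c • 1) * (M + d • 1)) := by
          congr 1; rw [sub_smul]; abel
      _ = (M + c • 1) * (M + c • 1) * (M + d • 1)
            - (M + d • 1) * ((M + c • 1) * (M + d • 1)) := by
          rw [Matrix.sub_mul, ← Matrix.mul_assoc (M + c • 1)]
      _ = 0 := by rw [hM, ← hcomm, ← Matrix.mul_assoc, hM3, sub_zero]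
  exact (smul_eq_zero.mp hfin).resolve_left (sub_ne_zero.mpr hne)

lemma one_four {F : Type*} [Field F] : (1 : Matrix (Fin 4) (Fin 4) F) =
    !![1, 0, 0, 0; 0, 1, 0, 0; 0, 0, 1, 0; 0, 0, 0, 1] := by
  ext i j
  fin_cases i <;> fin_cases j <;> simp

/-- The exceptional case in size four. -/
lemma key_four {F : Type*} [Field F] (c d : F) (hcd : c * d = 1) (hne : c ≠ d) :
    (!![0, -1, 0, 0; 1, -(c + d), 0, 0; 0, 0, 0, -1; 0, 0, 1, -(c + d)] :
      Matrix (Fin 4) (Fin 4) F) *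
      (1 + !![0, 0, -d ^ 2, d; 0, 0, -d, 1; 0, 0, 0, 0; 0, 0, 0, 0]) ∉ ProdInv2 F 4 := by
  have hM : (!![0, -1, 0, 0; 1, -(c + d), 0, 0; 0, 0, 0, -1; 0, 0, 1, -(c + d)] :
      Matrix (Fin 4) (Fin 4) F) *
      (1 + !![0, 0, -d ^ 2, d; 0, 0, -d, 1; 0, 0, 0, 0; 0, 0, 0, 0]) =
      !![0, -1, d, -1; 1, -(c + d), 1, -c; 0, 0, 0, -1; 0, 0, 1, -(c + d)] := by
    rw [one_four]
    ext i j
    fin_cases i <;> fin_cases j <;> simp [Matrix.mul_apply, Fin.sum_univ_four] <;>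
      linear_combination hcd
  have e1 : ∀ e : F, (!![0, -1, d, -1; 1, -(c + d), 1, -c; 0, 0, 0, -1; 0, 0, 1, -(c + d)] :
      Matrix (Fin 4) (Fin 4) F) + e • 1 =
      !![e, -1, d, -1; 1, e-(c + d), 1, -c; 0, 0, e, -1; 0, 0, 1, e-(c + d)] := by
    intro e
    rw [one_four]
    ext i j
    fin_cases i <;> fin_cases j <;> simp <;> ring
  have e2 : (!![c, -1, d, -1; 1, c-(c + d), 1, -c; 0, 0, c, -1; 0, 0, 1, c-(c + d)] :
      Matrix (Fin 4) (Fin 4) F) *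
      !![d, -1, d, -1; 1, d-(c + d), 1, -c; 0, 0, d, -1; 0, 0, 1, d-(c + d)] =
      !![0, 0, (d - c) * d, (c - d); 0, 0, (d - c), (c - d) * c; 0, 0, 0, 0; 0, 0, 0, 0] := by
    ext i j
    fin_cases i <;> fin_cases j <;> simp [Matrix.mul_apply, Fin.sum_univ_four] <;> grind
  rw [hM]
  apply key_minpoly _ c d hcd hne
  · rw [Matrix.mul_assoc, e1, e1, e2]
    ext i j
    fin_cases i <;> fin_cases j <;> simp [Matrix.mul_apply, Fin.sum_univ_four] <;> grind
  · rw [e1, e1, e2]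
    intro h
    have := congrFun (congrFun h 1) 2
    simp at this
    exact hne (by linear_combination -this)

lemma quad_root {F : Type*} [Field F] (g : Polynomial F)
    (hg : g.Monic) (hdeg : g.natDegree = 2) (hg0 : g.coeff 0 = 1)
    (hnotpow : ¬ ∃ (p : Polynomial F) (k : ℕ), p.Monic ∧ Irreducible p ∧
      p = reciprocalPoly p ∧ 1 ≤ k ∧ g = p ^ k) :
    reciprocalPoly g = g ∧ ∃ c d : F, c * d = 1 ∧ c ≠ d ∧ g.coeff 1 = c + d := by
  have hg2 : g.coeff 2 = 1 := by rw [← hdeg]; exact hg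
  have hrec : reciprocalPoly g = g := by
    unfold reciprocalPoly
    rw [hg0, inv_one, map_one, one_mul]
    ext i
    rw [Polynomial.coeff_reverse, hdeg]
    rcases i with _ | _ | _ | i
    · rw [Polynomial.revAt_le (by omega)]; simp [coeff_X, coeff_C, hg0, hg2]
    · rw [Polynomial.revAt_le (by omega)]
    · rw [Polynomial.revAt_le (by omega)]; simp [coeff_X, coeff_C, hg0, hg2]
    · rw [Polynomial.revAt_eq_self_of_lt (by omega)]
  refine ⟨hrec, ?_⟩
  have hirr : ¬ Irreducible g := fun h => hnotpow ⟨g, 1, hg, h, hrec.symm, le_rfl, by simp⟩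
  obtain ⟨c, d, h0, h1⟩ :=
    (Polynomial.Monic.not_irreducible_iff_exists_add_mul_eq_coeff hg hdeg).mp hirr
  refine ⟨c, d, by rw [← h0, hg0], ?_, h1⟩
  rintro rfl
  have hc : c * c = 1 := by rw [← h0, hg0]
  apply hnotpow
  refine ⟨X + C c, 2, monic_X_add_C c, irreducible_of_degree_eq_one (degree_X_add_C c), ?_,
    by norm_num, ?_⟩
  · unfold reciprocalPoly
    have hci : c⁻¹ = c := inv_eq_of_mul_eq_one_left hc
    ext i
    rw [Polynomial.coeff_C_mul, Polynomial.coeff_reverse, natDegree_X_add_C]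
    rcases i with _ | _ | i
    · rw [Polynomial.revAt_le (by omega)]; simp [coeff_X, coeff_C, hci]
    · rw [Polynomial.revAt_le (by omega)]; simp [coeff_X, coeff_C, hci, hc, coeff_C]
    · rw [Polynomial.revAt_eq_self_of_lt (by omega)]
      simp [coeff_X, coeff_C]
  · rw [hg.as_sum, hdeg]
    simp only [Finset.sum_range_succ, Finset.sum_range_zero, h0, h1, map_add, map_mul]
    ring

theorem stmt3 (F : Type*) [Field F] (n : ℕ) (hn : 2 ≤ n) (g : Polynomial F)
    (hg : g.Monic) (hdeg : g.natDegree = n) (hg0 : g.coeff 0 ≠ 0)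
    (hnotpow : ¬ ∃ (p : Polynomial F) (k : ℕ), p.Monic ∧ Irreducible p ∧
      p = reciprocalPoly p ∧ 1 ≤ k ∧ g = p ^ k) :
    ∃ N : Matrix (Fin (n + n)) (Fin (n + n)) F,
      (∀ i j : Fin (n + n), (j : ℕ) ≤ (i : ℕ) → N i j = 0) ∧
      (Matrix.reindex finSumFinEquiv finSumFinEquiv
          (Matrix.fromBlocks (companionMatrix n g) 0 0
            (companionMatrix n (reciprocalPoly g)))) * (1 + N) ∉ ProdInv2 F (n + n) := by
  by_contra! hcon
  set A := (Matrix.reindex finSumFinEquiv finSumFinEquiv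
          (Matrix.fromBlocks (companionMatrix n g) 0 0
            (companionMatrix n (reciprocalPoly g)))) with hA
  have hA0 : A ∈ ProdInv2 F (n + n) := by
    have := hcon 0 (by simp)
    simpa using this
  have hll : ∀ i j : Fin n, A (Fin.castAdd n i) (Fin.castAdd n j) = companionMatrix n g i j := by
    intro i j; simp [hA]
  have hlr : ∀ i j : Fin n, A (Fin.natAdd n i) (Fin.castAdd n j) = 0 := by
    intro i j
    rw [hA, Matrix.reindex_apply, Matrix.submatrix_apply, finSumFinEquiv_symm_apply_natAdd,
      finSumFinEquiv_symm_apply_castAdd]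
    rfl
  have hE : ∀ i j : Fin (n + n), i < j → ∃ B : Matrix (Fin (n + n)) (Fin (n + n)) F,
      B * A = 1 ∧ A j i = - B j i := by
    intro i j hij
    refine key_trace A i j hij.ne hA0 (hcon _ ?_)
    intro a b hab
    rw [Matrix.single_apply, if_neg]
    rintro ⟨rfl, rfl⟩
    exact absurd hij (not_lt.mpr (Fin.le_def.mpr hab))
  -- shift property of the first `n - 1` columns
  have hcol : ∀ (B : Matrix (Fin (n + n)) (Fin (n + n)) F) (r : Fin (n + n)) (j k : Fin n),
      (k : ℕ) = j + 1 → (B * A) r (Fin.castAdd n j) = B r (Fin.castAdd n k) := by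
    intro B r j k hk
    rw [Matrix.mul_apply, Fin.sum_univ_add]
    simp only [hll, hlr, mul_zero, Finset.sum_const_zero, add_zero]
    rw [Finset.sum_eq_single k]
    · have : (j : ℕ) + 1 ≠ n := by have := k.2; omega
      simp [companionMatrix, hk, this]
    · intro b _ hb
      have h1 : (j : ℕ) + 1 ≠ n := by have := k.2; omega
      have h2 : (b : ℕ) ≠ j + 1 := fun h => hb (Fin.ext (by omega))
      simp [companionMatrix, h1, h2]
    · simp
  rcases Nat.lt_or_ge 2 n with h3 | h3
  · obtain ⟨B, hBA, hB⟩ := hE (Fin.castAdd n ⟨1, by omega⟩) (Fin.castAdd n ⟨2, h3⟩)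
      (by simp [Fin.lt_def])
    have h1 := hcol B (Fin.castAdd n ⟨2, h3⟩) ⟨0, by omega⟩ ⟨1, by omega⟩ rfl
    rw [hBA, Matrix.one_apply_ne (by simp [Fin.ext_iff])] at h1
    rw [← h1, hll] at hB
    have : 1 + 1 ≠ n := by omega
    simp [companionMatrix, this] at hB
  · obtain rfl : n = 2 := by omega
    have ha : g.coeff 0 = 1 := by
      obtain ⟨B, hBA, hB⟩ := hE (Fin.castAdd 2 0) (Fin.castAdd 2 1) (by simp [Fin.lt_def])
      have h1 := hcol B (Fin.castAdd 2 1) 0 1 rfl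
      rw [hBA, Matrix.one_apply_ne (by simp [Fin.ext_iff])] at h1
      have h2 : (B * A) (Fin.castAdd 2 1) (Fin.castAdd 2 1) = 1 := by
        rw [hBA, Matrix.one_apply_eq]
      rw [Matrix.mul_apply, Fin.sum_univ_add] at h2
      simp only [hll, hlr, mul_zero, Finset.sum_const_zero, add_zero, Fin.sum_univ_two] at h2
      rw [← h1] at h2
      rw [hll] at hB
      simp [companionMatrix] at hB h2
      have : B (Fin.castAdd 2 1) (Fin.castAdd 2 0) = -1 := by
        simp; linear_combination hB
      simp at this
      rw [this] at h2
      linear_combination h2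
    obtain ⟨hrec, c, d, hcd, hne, hb⟩ := quad_root g hg hdeg ha hnotpow
    have hA4 : A = (!![0, -1, 0, 0; 1, -(c + d), 0, 0; 0, 0, 0, -1; 0, 0, 1, -(c + d)] :
        Matrix (Fin 4) (Fin 4) F) := by
      rw [hA, hrec]
      have s0 : (finSumFinEquiv (m := 2) (n := 2)).symm 0 = Sum.inl 0 := rfl
      have s1 : (finSumFinEquiv (m := 2) (n := 2)).symm 1 = Sum.inl 1 := rfl
      have s2 : (finSumFinEquiv (m := 2) (n := 2)).symm 2 = Sum.inr 0 := rfl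
      have s3 : (finSumFinEquiv (m := 2) (n := 2)).symm 3 = Sum.inr 1 := rfl
      ext i j
      rw [Matrix.reindex_apply, Matrix.submatrix_apply]
      fin_cases i <;> fin_cases j <;>
        simp [s0, s1, s2, s3, companionMatrix, ha, hb]
    refine key_four c d hcd hne ?_
    rw [← hA4]
    refine hcon _ ?_
    intro i j hij
    fin_cases i <;> fin_cases j <;> simp at hij ⊢
end

section
/- Let F be a field, let n ≥ 3, and let f(x) be a monic polynomial of degree n over F with f(0) ≠ 0 such that f is a power of a self-reciprocal irreducible monic polynomial, and let C_f ∈ M_n(F) be its companion matrix (so C_f ∈ B_n). Then there exists a strictly upper triangular matrix N ∈ M_n(F) such that C_f(I + N) ∉ B_n. -/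
open Matrix Polynomial

/-- Products of two involutions have the same trace as their inverse. -/
theorem trace_eq_of_prodInv2 {F : Type*} [Field F] {n : ℕ} {A B : Matrix (Fin n) (Fin n) F}
    (hA : A ∈ ProdInv2 F n) (hBA : B * A = 1) : B.trace = A.trace := by
  obtain ⟨J₁, J₂, h1, h2, rfl⟩ := hA
  have hB : B = J₂ * J₁ := by
    have h3 : (J₁ * J₂) * (J₂ * J₁) = 1 := by
      rw [Matrix.mul_assoc, ← Matrix.mul_assoc J₂, h2, Matrix.one_mul, h1]
    calc B = B * ((J₁ * J₂) * (J₂ * J₁)) := by rw [h3, Matrix.mul_one]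
      _ = J₂ * J₁ := by rw [← Matrix.mul_assoc, hBA, Matrix.one_mul]
  rw [hB, Matrix.trace_mul_comm]

/-- The companion matrix of `x^n + x + a`. -/
def auxA {F : Type*} [Field F] (n : ℕ) (a : F) : Matrix (Fin n) (Fin n) F :=
  fun i j => (if (i : ℕ) = (j : ℕ) + 1 then 1 else 0) +
    (if (j : ℕ) + 1 = n then (if (i : ℕ) = 0 then -a else 0) + (if (i : ℕ) = 1 then -1 else 0)
      else 0)

/-- The inverse of `auxA`. -/
def auxB {F : Type*} [Field F] (n : ℕ) (a : F) : Matrix (Fin n) (Fin n) F :=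
  fun i j => (if (i : ℕ) + 1 = (j : ℕ) then 1 else 0) +
    (if (j : ℕ) = 0 then (if (i : ℕ) = 0 then -a⁻¹ else 0) +
      (if (i : ℕ) + 1 = n then -a⁻¹ else 0) else 0)

/-- The strictly upper triangular perturbation. -/
def auxN {F : Type*} [Field F] (n : ℕ) (f : Polynomial F) : Matrix (Fin n) (Fin n) F :=
  fun i j => if (j : ℕ) + 1 = n ∧ (i : ℕ) < (j : ℕ) then
    f.coeff (i + 1) - (if (i : ℕ) = 0 then 1 else 0) else 0

theorem auxB_mul_auxA {F : Type*} [Field F] (m : ℕ) (a : F) (ha : a ≠ 0) :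
    auxB (m + 3) a * auxA (m + 3) a = 1 := by
  ext i j
  rw [Matrix.mul_apply]
  induction j using Fin.lastCases with
  | cast j =>
    rw [Finset.sum_eq_single j.succ]
    · have := j.2
      by_cases h : i = j.castSucc
      · subst h
        simp [auxA, auxB, this.ne]
      · have h' : (i : ℕ) ≠ j := fun e => h (Fin.ext (by simpa using e))
        simp [auxA, auxB, h, h']
    · intro k _ hk
      have h1 : (k : ℕ) ≠ j + 1 := fun e => hk (Fin.ext (by simpa using e))
      have h2 : (j : ℕ) ≠ m + 2 := j.2.ne
      simp [auxA, h1, h2]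
    · simp
  | last =>
    rw [Fin.sum_univ_succ, Fin.sum_univ_succ, Finset.sum_eq_zero]
    · by_cases h0 : (i : ℕ) = 0
      · have : i = 0 := Fin.ext h0
        subst this
        simp [auxA, auxB, ha, Matrix.one_apply, Fin.ext_iff]
      · by_cases hl : i = Fin.last (m + 2)
        · subst hl
          simp [auxA, auxB, ha]
        · have h' : (i : ℕ) ≠ m + 2 := fun e => hl (Fin.ext (by simpa using e))
          have h'' : i ≠ 0 := fun e => h0 (by simp [e])
          simp [auxA, auxB, h'', hl, h']
    · intro k _
      have := k.2
      have h1 : (k : ℕ) ≠ m + 1 := this.ne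
      simp [auxA, h1]

theorem trace_auxA {F : Type*} [Field F] (m : ℕ) (a : F) : (auxA (m + 3) a).trace = 0 := by
  rw [Matrix.trace]
  refine Finset.sum_eq_zero fun i _ => ?_
  simp only [Matrix.diag_apply, auxA]
  rw [if_neg (by omega)]
  split_ifs <;> first | omega | simp

theorem trace_auxB {F : Type*} [Field F] (m : ℕ) (a : F) : (auxB (m + 3) a).trace = -a⁻¹ := by
  rw [Matrix.trace, Fin.sum_univ_succ, Finset.sum_eq_zero]
  · simp [auxB]
  · intro i _
    simp [auxB]

theorem companion_mul_auxN {F : Type*} [Field F] (m : ℕ) (f : Polynomial F) :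
    companionMatrix (m + 3) f * (1 + auxN (m + 3) f) = auxA (m + 3) (f.coeff 0) := by
  rw [Matrix.mul_add, Matrix.mul_one]
  ext i j
  rw [Matrix.add_apply, Matrix.mul_apply, Fin.sum_univ_castSucc]
  have hlast : auxN (m + 3) f (Fin.last (m + 2)) j = 0 := by
    have := j.2
    rw [auxN, if_neg]
    simp only [Fin.val_last]
    omega
  rw [hlast, mul_zero, add_zero]
  induction i using Fin.cases with
  | zero =>
    rw [Finset.sum_eq_zero]
    · simp only [companionMatrix, auxA]
      simp
    · intro k _
      have : (k : ℕ) ≠ m + 2 := k.2.ne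
      simp [companionMatrix, this]
  | succ i =>
    rw [Finset.sum_eq_single i]
    · have h2 : (i : ℕ) ≠ m + 2 := i.2.ne
      by_cases hj : (j : ℕ) = m + 2
      · have h3 : (i : ℕ) < m + 2 := i.2
        simp [companionMatrix, auxA, auxN, hj, h2, h3]
        split_ifs <;> ring
      · simp [companionMatrix, auxA, auxN, hj]
    · intro k _ hk
      have h1 : (i : ℕ) ≠ k := fun e => hk (Fin.ext e.symm)
      have h2 : (k : ℕ) ≠ m + 2 := k.2.ne
      simp [companionMatrix, h1, h2]
    · simp

theorem stmt4 (F : Type*) [Field F] (n : ℕ) (hn : 3 ≤ n) (f : Polynomial F)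
    (hf : f.Monic) (hdeg : f.natDegree = n) (hf0 : f.coeff 0 ≠ 0)
    (hpow : ∃ (p : Polynomial F) (k : ℕ), p.Monic ∧ Irreducible p ∧
      p = reciprocalPoly p ∧ 1 ≤ k ∧ f = p ^ k) :
    ∃ N : Matrix (Fin n) (Fin n) F,
      (∀ i j : Fin n, (j : ℕ) ≤ (i : ℕ) → N i j = 0) ∧
      (companionMatrix n f) * (1 + N) ∉ ProdInv2 F n := by
  obtain ⟨m, rfl⟩ : ∃ m, n = m + 3 := ⟨n - 3, by omega⟩
  refine ⟨auxN (m + 3) f, fun i j hij => ?_, fun h => ?_⟩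
  · rw [auxN, if_neg]
    omega
  · rw [companion_mul_auxN] at h
    have h1 := trace_eq_of_prodInv2 h (auxB_mul_auxA m _ hf0)
    rw [trace_auxA, trace_auxB] at h1
    exact hf0 (by simpa using h1)
end

section
/- Let F be a field with char(F) ≠ 2, let a₁ ∈ F, and let A ∈ M_2(F) be the matrix with rows (0, −1) and (1, −a₁) (so A ∈ B_2). Then for every nonzero r ∈ F there exists a matrix X ∈ B_2 with trace(X) = 0 such that rAX ∉ B_2. -/
open Matrix

lemma invol_cases {F : Type*} [Field F] (J : Matrix (Fin 2) (Fin 2) F) (h : J * J = 1) :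
    J = 1 ∨ J = -1 ∨ (J.trace = 0 ∧ J.det = -1) := by
  have h00 := congrFun (congrFun h 0) 0
  have h01 := congrFun (congrFun h 0) 1
  have h10 := congrFun (congrFun h 1) 0
  have h11 := congrFun (congrFun h 1) 1
  simp [Matrix.mul_apply, Fin.sum_univ_two] at h00 h01 h10 h11
  by_cases ht : J 0 0 + J 1 1 = 0
  · right; right
    rw [Matrix.trace_fin_two, Matrix.det_fin_two]
    exact ⟨ht, by linear_combination (J 0 0) * ht - h00⟩
  · have hb : J 0 1 = 0 := (mul_eq_zero.mp
      (by linear_combination h01 : J 0 1 * (J 0 0 + J 1 1) = 0)).resolve_right ht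
    have hc : J 1 0 = 0 := (mul_eq_zero.mp
      (by linear_combination h10 : J 1 0 * (J 0 0 + J 1 1) = 0)).resolve_right ht
    have hd : J 0 0 - J 1 1 = 0 := (mul_eq_zero.mp
      (by linear_combination h00 - h11 :
        (J 0 0 - J 1 1) * (J 0 0 + J 1 1) = 0)).resolve_right ht
    have hd' : J 1 1 = J 0 0 := (sub_eq_zero.mp hd).symm
    have ha : J 0 0 * J 0 0 = 1 := by simpa [hb] using h00
    rcases mul_self_eq_one_iff.mp ha with h1 | h1
    · left
      ext i j
      fin_cases i <;> fin_cases j <;> simp [hb, hc, hd', h1]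
    · right; left
      ext i j
      fin_cases i <;> fin_cases j <;> simp [hb, hc, hd', h1]

lemma prodInv2_det_trace {F : Type*} [Field F] (M : Matrix (Fin 2) (Fin 2) F)
    (h : M ∈ ProdInv2 F 2) : M.det = 1 ∨ (M.det = -1 ∧ M.trace = 0) := by
  obtain ⟨J, K, hJ, hK, rfl⟩ := h
  rcases invol_cases J hJ with rfl | rfl | ⟨h1, h2⟩ <;>
  rcases invol_cases K hK with rfl | rfl | ⟨h3, h4⟩ <;>
  simp_all [Matrix.det_neg]

theorem stmt5 (F : Type*) [Field F] (hchar : ringChar F ≠ 2) (a₁ : F)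
    (A : Matrix (Fin 2) (Fin 2) F) (hA : A = !![0, -1; 1, -a₁]) :
    ∀ r : F, r ≠ 0 → ∃ X ∈ ProdInv2 F 2, Matrix.trace X = 0 ∧
      r • (A * X) ∉ ProdInv2 F 2 := by
  intro r hr
  have h2 : (2 : F) ≠ 0 := Ring.two_ne_zero hchar
  subst hA
  by_cases hr2 : r ^ 2 = -1
  · refine ⟨!![0, -1; 1, 0], ⟨!![1, 0; 0, -1], !![0, -1; -1, 0], ?_, ?_, ?_⟩, ?_, ?_⟩
    · simp [Matrix.one_fin_two]
    · simp [Matrix.one_fin_two]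
    · simp
    · simp [Matrix.trace_fin_two]
    · intro h
      rcases prodInv2_det_trace _ h with h | ⟨-, h⟩
      · simp [Matrix.det_fin_two] at h
        exact h2 (by linear_combination hr2 - h)
      · simp [Matrix.trace_fin_two] at h
        exact mul_ne_zero h2 hr (by linear_combination -h)
  · obtain ⟨b, hb⟩ : ∃ b : F, a₁ + b ≠ 0 := ⟨1 - a₁, by simp⟩
    refine ⟨!![1, b; 0, -1], ⟨!![1, b; 0, -1], 1, ?_, ?_, ?_⟩, ?_, ?_⟩
    · simp [Matrix.one_fin_two]
    · simp
    · simp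
    · simp [Matrix.trace_fin_two]
    · intro h
      rcases prodInv2_det_trace _ h with h | ⟨-, h⟩
      · simp [Matrix.det_fin_two] at h
        exact hr2 (by linear_combination -h)
      · simp [Matrix.trace_fin_two] at h
        exact mul_ne_zero hr hb (by first | linear_combination h | (rcases h with h | h <;> [exact absurd h hr; linear_combination r * h]))
end

section
/- Let F be a field with char(F) ≠ 2, let a₁ ∈ F, let α ∈ {−1, 1}, and let A ∈ M_3(F) be the block-diagonal matrix B ⊕ (α), where B ∈ M_2(F) has rows (0, −1) and (1, −a₁) (so A ∈ B_3). Then for every nonzero r ∈ F there exists a matrix X ∈ B_3 with trace(X) = 0 such that rAX ∉ B_3. -/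
open Matrix

theorem stmt6 (F : Type*) [Field F] (hchar : ringChar F ≠ 2) (a₁ α : F)
    (hα : α = 1 ∨ α = -1)
    (A : Matrix (Fin 3) (Fin 3) F) (hA : A = !![0, -1, 0; 1, -a₁, 0; 0, 0, α]) :
    ∀ r : F, r ≠ 0 → ∃ X ∈ ProdInv2 F 3, Matrix.trace X = 0 ∧
      r • (A * X) ∉ ProdInv2 F 3 := by
  subst hA
  intro r hr
  have h2 : (2 : F) ≠ 0 := Ring.two_ne_zero hchar
  have hαα : α * α = 1 := by rcases hα with h | h <;> rw [h] <;> ring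
  have ht : ∃ t : F, r * (-t ^ 2 - 1 + a₁ * t) ≠ - r⁻¹ := by
    by_contra hcon
    push Not at hcon
    have h0 := hcon 0
    have h1 := hcon 1
    have h3 := hcon (-1)
    have h4 : r * 2 = 0 := by linear_combination 2 * h0 - h1 - h3
    exact (mul_ne_zero hr h2) h4
  obtain ⟨t, ht⟩ := ht
  refine ⟨!![t, -t ^ 2, 1; 1, -t, 0; 0, 1, 0],
    ⟨!![t, 1 - t ^ 2, 0; 1, -t, 0; 0, 0, 1], !![1, -t, t; 0, 0, 1; 0, 1, 0], ?_, ?_, ?_⟩, ?_, ?_⟩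
  · ext i j
    fin_cases i <;> fin_cases j <;> simp [Matrix.mul_apply, Fin.sum_univ_three] <;> ring
  · ext i j
    fin_cases i <;> fin_cases j <;> simp [Matrix.mul_apply, Fin.sum_univ_three]
  · ext i j
    fin_cases i <;> fin_cases j <;> simp [Matrix.mul_apply, Fin.sum_univ_three] <;> ring
  · simp [Matrix.trace, Fin.sum_univ_three]
  · rintro ⟨J, K, hJ, hK, hZ⟩
    set Z : Matrix (Fin 3) (Fin 3) F := r • (!![0, -1, 0; 1, -a₁, 0; 0, 0, α] *
      !![t, -t ^ 2, 1; 1, -t, 0; 0, 1, 0]) with hZdef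
    let W : Matrix (Fin 3) (Fin 3) F := r⁻¹ • !![-1, 0, t * α; 0, 0, α; t - a₁, 1, 0]
    have hZW : Z * W = 1 := by
      rw [hZdef, Matrix.smul_mul, Matrix.mul_smul, smul_smul, mul_inv_cancel₀ hr, one_smul]
      ext i j
      fin_cases i <;> fin_cases j <;> simp [Matrix.mul_apply, Fin.sum_univ_three] <;>
        first | done | (ring_nf; done) | linear_combination hαα
    have hKJ : K * J * Z = 1 := by
      rw [hZ, Matrix.mul_assoc, ← Matrix.mul_assoc J J K, hJ, Matrix.one_mul, hK]
    have hW : W = K * J := by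
      calc W = (K * J * Z) * W := by rw [hKJ, Matrix.one_mul]
        _ = K * J := by rw [Matrix.mul_assoc (K * J), hZW, Matrix.mul_one]
    have htr : Z.trace = W.trace := by rw [hZ, hW, Matrix.trace_mul_comm]
    apply ht
    have e1 : Z.trace = r * (-t ^ 2 - 1 + a₁ * t) := by
      rw [hZdef]
      simp [Matrix.trace, Matrix.mul_apply, Fin.sum_univ_three]
      ring
    have e2 : W.trace = - r⁻¹ := by
      simp [W, Matrix.trace, Fin.sum_univ_three]
    rw [← e1, htr, e2]
end
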